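/- arXiv:2106.04818 — 3 statements merged into one kernel-verified Lean document; each statement's English description precedes it below -/
import Mathlib

section
/- Let p be a prime, G a finite group, P a Sylow p-subgroup of G, and χ an irreducible complex character of G. Assume that χ is imprimitive, i.e. χ = ψ^G for some proper subgroup H < G and some irreducible character ψ of H. Assume further that for every proper subgroup K < G, every Sylow p-subgroup S of K, and every irreducible character θ of K, the restriction θ_S is a sum of characters of the form μ^S induced from irreducible characters μ of subgroups R ≤ S with θ(1)_p = |S : R|. Then χ_P is a sum of characters of the form λ^P induced from irreducible characters λ of subgroups Q ≤ P with χ(1)_p = |P : Q|. -/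
open scoped Classical

/-- The induced character (as a class function formula): for `f` a function on a
subgroup `H` of a finite group `G`, `inducedChar H f g = (1/|H|) ∑_{x ∈ G, xgx⁻¹ ∈ H} f (xgx⁻¹)`. -/
noncomputable def inducedChar {G : Type*} [Group G] [Fintype G] (H : Subgroup G)
    (f : H → ℂ) : G → ℂ :=
  fun g => (Fintype.card H : ℂ)⁻¹ *
    ∑ x : G, if h : x * g * x⁻¹ ∈ H then f ⟨x * g * x⁻¹, h⟩ else 0

/-- `χ` is the character of an irreducible complex representation of `G`. -/
def IsIrreducibleCharacter {G : Type} [Group G] (χ : G → ℂ) : Prop :=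
  ∃ V : FDRep ℂ G, CategoryTheory.Simple V ∧ χ = FDRep.character V

/-- The restriction of `χ` (a character of degree `d` of the ambient group `G`) to the
subgroup `P` is a sum of characters `λ^P` induced from irreducible characters `λ` of
subgroups `Q ≤ P` satisfying `d_p = |P : Q|` (the `p`-part of the degree equals the index). -/
def SumInducedProperty (p : ℕ) {G : Type} [Group G] [Fintype G] (P : Subgroup G)
    (χ : G → ℂ) (d : ℕ) : Prop :=
  ∃ (n : ℕ) (Q : Fin n → Subgroup ↥P) (lam : (i : Fin n) → ↥(Q i) → ℂ),
    (∀ i, IsIrreducibleCharacter (lam i)) ∧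
    (∀ i, p ^ (d.factorization p) = (Q i).index) ∧
    (∀ x : ↥P, χ ↑x = ∑ i, inducedChar (Q i) (lam i) x)

/-!
Write `χ = ψ^G` with `ψ ∈ Irr(H)`. By Mackey's formula `χ_P` is a sum of characters induced to `P`
from the `p`-groups `H^x ∩ P`, of restrictions of conjugates of `ψ`. Such a `p`-group is conjugate
into a Sylow subgroup `S` of `H`, and `ψ_S` is a sum of characters induced from subgroups of order
`|S| / ψ(1)_p`. A second application of Mackey's formula exhibits `χ_P` as a sum of characters
induced from subgroups of `P` whose orders divide `|S| / ψ(1)_p`, and this number is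
`|P| / χ(1)_p` because `χ(1) = |G : H| ψ(1)`. Since `P` is a `p`-group, each of these subgroups
lies in a subgroup `Q` of order exactly `|P| / χ(1)_p`; inducing first to `Q` and splitting the
result into irreducible characters gives the required decomposition.
-/

section

variable {k E D G : Type*} [Field k] [Group E] [Group D] [Group G]

section Induction

variable [Fintype E] [Fintype G]

/-- Induction of functions along an arbitrary homomorphism `φ : E →* G` of finite groups, as a
linear map. On characters it is induction from `E / ker φ` to `G` of the `ker φ`-invariants;
allowing non-injective `φ` lets Mackey's formula be stated with fibre products. -/
noncomputable def inducedAlong (φ : E →* G) : (E → k) →ₗ[k] G → k :=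
  (Nat.card E : k)⁻¹ • ∑ e : E, ∑ x : G,
    LinearMap.single k (fun _ ↦ k) (x⁻¹ * φ e * x) ∘ₗ LinearMap.proj e

lemma inducedAlong_apply (φ : E →* G) (θ : E → k) (g : G) :
    inducedAlong φ θ g =
      (Nat.card E : k)⁻¹ * ∑ x : G, ∑ e : E, if φ e = x * g * x⁻¹ then θ e else 0 := by
  have conj_iff (e : E) (x : G) : g = x⁻¹ * φ e * x ↔ φ e = x * g * x⁻¹ := by
    rw [eq_mul_inv_iff_mul_eq, mul_assoc, eq_inv_mul_iff_mul_eq, eq_comm]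
  simp [inducedAlong, Finset.sum_apply, Pi.single_apply, conj_iff, Finset.sum_comm (γ := E)]

lemma inducedAlong_single (φ : E →* G) (e : E) (c : k) :
    inducedAlong φ (Pi.single e c) =
      (Nat.card E : k)⁻¹ • ∑ x : G, Pi.single (x⁻¹ * φ e * x) c := by
  simp only [inducedAlong, LinearMap.smul_apply, LinearMap.sum_apply, LinearMap.comp_apply,
    LinearMap.proj_apply, LinearMap.single_apply]
  rw [Finset.sum_eq_single_of_mem e (Finset.mem_univ e) fun e' _ he' ↦ by simp [he']]
  simp

lemma inducedAlong_single_conj (φ : E →* G) (e y : E) (c : k) :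
    inducedAlong φ (Pi.single (y⁻¹ * e * y) c) = inducedAlong φ (Pi.single e c) := by
  rw [inducedAlong_single, inducedAlong_single]
  congr 1
  refine Fintype.sum_equiv (Equiv.mulLeft (φ y)) _ _ fun x ↦ ?_
  simp [mul_assoc]

theorem inducedAlong_inducedAlong [CharZero k] [Fintype D] (φ : E →* D) (ψ : D →* G)
    (θ : E → k) : inducedAlong ψ (inducedAlong φ θ) = inducedAlong (ψ.comp φ) θ := by
  suffices inducedAlong ψ ∘ₗ inducedAlong φ = inducedAlong (k := k) (ψ.comp φ) from
    LinearMap.congr_fun this θ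
  refine LinearMap.pi_ext fun e c ↦ ?_
  rw [LinearMap.comp_apply, inducedAlong_single, map_smul, map_sum]
  simp only [inducedAlong_single_conj, Finset.sum_const, Finset.card_univ]
  rw [inducedAlong_single, inducedAlong_single, ← Nat.card_eq_fintype_card,
    ← Nat.cast_smul_eq_nsmul k, smul_inv_smul₀ (Nat.cast_ne_zero.mpr Nat.card_pos.ne')]
  rfl

lemma inducedChar_eq_inducedAlong (H : Subgroup G) (f : H → ℂ) :
    inducedChar H f = inducedAlong H.subtype f := by
  funext g
  rw [inducedChar, inducedAlong_apply, Nat.card_eq_fintype_card]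
  congr 1
  refine Finset.sum_congr rfl fun x _ ↦ ?_
  split_ifs with h
  · rw [Finset.sum_eq_single_of_mem ⟨_, h⟩ (Finset.mem_univ _)]
    · simp
    · exact fun e _ he ↦ if_neg fun he' ↦ he (Subtype.ext he')
  · exact (Finset.sum_eq_zero fun e _ ↦ if_neg fun he ↦
      h (Set.mem_of_eq_of_mem (Eq.symm he) e.2)).symm

lemma inducedChar_one (H : Subgroup G) (f : H → ℂ) : inducedChar H f 1 = H.index * f 1 := by
  have hH : (Nat.card H : ℂ) ≠ 0 := Nat.cast_ne_zero.mpr Nat.card_pos.ne'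
  rw [inducedChar_eq_inducedAlong, inducedAlong_apply, inv_mul_eq_iff_eq_mul₀ hH, ← mul_assoc,
    ← Nat.cast_mul, H.card_mul_index]
  simp

end Induction

section Mackey

lemma card_inv_mul_sum_eq_sum_orbits [CharZero k] {K X : Type*} [Group K] [Finite K] [Fintype X]
    [MulAction K X] (a : X → k) (ha : ∀ (c : K) (x : X), a (c • x) = a x) :
    (Nat.card K : k)⁻¹ * ∑ x, a x = ∑ ω : MulAction.orbitRel.Quotient K X,
      (Nat.card (MulAction.stabilizer K ω.out) : k)⁻¹ * a ω.out := by
  have hK : (Nat.card K : k) ≠ 0 := Nat.cast_ne_zero.mpr Nat.card_pos.ne'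
  rw [inv_mul_eq_iff_eq_mul₀ hK, Finset.mul_sum,
    Fintype.sum_equiv (MulAction.selfEquivSigmaOrbits K X) a
      (fun y : Σ ω : MulAction.orbitRel.Quotient K X, MulAction.orbit K ω.out ↦ a y.2)
      fun x ↦ rfl, Fintype.sum_sigma]
  refine Finset.sum_congr rfl fun ω _ ↦ ?_
  have const_on_orbit (y : MulAction.orbit K ω.out) : a y = a ω.out := by
    obtain ⟨_, c, rfl⟩ := y
    exact ha c _
  have orbit_stabilizer : (Nat.card K : k) =
      Nat.card (MulAction.orbit K ω.out) * Nat.card (MulAction.stabilizer K ω.out) := by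
    simp only [← Nat.cast_mul, ← Nat.card_prod,
      Nat.card_congr (MulAction.orbitProdStabilizerEquivGroup K ω.out)]
  have hstab : (Nat.card (MulAction.stabilizer K ω.out) : k) ≠ 0 :=
    Nat.cast_ne_zero.mpr Nat.card_pos.ne'
  simp only [const_on_orbit, Finset.sum_const, Finset.card_univ, nsmul_eq_mul,
    ← Nat.card_eq_fintype_card, orbit_stabilizer]
  field_simp

/-- The action of `E × D` on `G` by `(e, d) • x = φ e * x * (β d)⁻¹`, whose orbits are the double
cosets of the images of `φ` and `β`. -/
abbrev doubleCosetAction (φ : E →* G) (β : D →* G) : MulAction (E × D) G where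
  smul c x := φ c.1 * x * (β c.2)⁻¹
  one_smul x := show φ 1 * x * (β 1)⁻¹ = x by simp
  mul_smul a b x := show φ (a.1 * b.1) * x * (β (a.2 * b.2))⁻¹ =
      φ a.1 * (φ b.1 * x * (β b.2)⁻¹) * (β a.2)⁻¹ by simp [mul_assoc]

/-- The fibre product of `φ` and the `x`-conjugate of `β`. When `φ` and `β` are inclusions of
subgroups `E` and `D`, its second projection identifies it with `x⁻¹Ex ∩ D`. -/
def conjPullback (φ : E →* G) (β : D →* G) (x : G) : Subgroup (E × D) :=
  (φ.comp (.fst E D)).eqLocus (((MulAut.conj x).toMonoidHom.comp β).comp (.snd E D))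

lemma mem_conjPullback {φ : E →* G} {β : D →* G} {x : G} {c : E × D} :
    c ∈ conjPullback φ β x ↔ φ c.1 = x * β c.2 * x⁻¹ :=
  Iff.rfl

lemma stabilizer_doubleCosetAction (φ : E →* G) (β : D →* G) (x : G) :
    letI := doubleCosetAction φ β
    MulAction.stabilizer (E × D) x = conjPullback φ β x := by
  let := doubleCosetAction φ β
  ext c
  rw [MulAction.mem_stabilizer_iff, mem_conjPullback, eq_mul_inv_iff_mul_eq,
    ← mul_inv_eq_iff_eq_mul]
  rfl

lemma fst_injective_conjPullback (φ : E →* G) {β : D →* G} (hβ : Function.Injective β) (x : G) :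
    Function.Injective ((MonoidHom.fst E D).comp (conjPullback φ β x).subtype) := by
  rintro ⟨⟨e, d⟩, h⟩ ⟨⟨e', d'⟩, h'⟩ (rfl : e = e')
  have : x * β d * x⁻¹ = x * β d' * x⁻¹ :=
    (mem_conjPullback.mp h).symm.trans (mem_conjPullback.mp h')
  rw [mul_left_inj, mul_right_inj, hβ.eq_iff] at this
  subst this
  rfl

lemma snd_injective_conjPullback {φ : E →* G} (hφ : Function.Injective φ) (β : D →* G) (x : G) :
    Function.Injective ((MonoidHom.snd E D).comp (conjPullback φ β x).subtype) := by
  rintro ⟨⟨e, d⟩, h⟩ ⟨⟨e', d'⟩, h'⟩ (rfl : d = d')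
  have : φ e = φ e' := (mem_conjPullback.mp h).trans (mem_conjPullback.mp h').symm
  rw [hφ.eq_iff] at this
  subst this
  rfl

variable [Fintype E] [Fintype D]

/-- The contribution of `x : G` to the value at `β d` of the function induced from `θ`, summed
over the conjugates of `d`; summing makes it constant on double cosets. -/
noncomputable def mackeySum (φ : E →* G) (β : D →* G) (θ : E → k) (d : D) (x : G) : k :=
  ∑ y : D, ∑ e : E, if φ e = x * β (y * d * y⁻¹) * x⁻¹ then θ e else 0

lemma inducedAlong_map_eq_sum_mackeySum [CharZero k] [Fintype G] (φ : E →* G) (β : D →* G)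
    (θ : E → k) (d : D) :
    inducedAlong φ θ (β d) = (Nat.card (E × D) : k)⁻¹ * ∑ x, mackeySum φ β θ d x := by
  have translate (y : D) :
      (∑ x : G, ∑ e : E, if φ e = x * β (y * d * y⁻¹) * x⁻¹ then θ e else 0) =
        ∑ x : G, ∑ e : E, if φ e = x * β d * x⁻¹ then θ e else 0 :=
    Fintype.sum_equiv (Equiv.mulRight (β y)) _ _ fun x ↦ by simp [mul_assoc]
  have hD : (Nat.card D : k) ≠ 0 := Nat.cast_ne_zero.mpr Nat.card_pos.ne'
  simp only [mackeySum]
  rw [Finset.sum_comm, Finset.sum_congr rfl fun y _ ↦ translate y, Finset.sum_const,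
    Finset.card_univ, ← Nat.card_eq_fintype_card, nsmul_eq_mul, Nat.card_prod, Nat.cast_mul,
    mul_inv, mul_assoc, inv_mul_cancel_left₀ hD, inducedAlong_apply]

lemma inducedAlong_conjPullback_apply (φ : E →* G) (β : D →* G) (θ : E → k) (d : D) (x : G) :
    inducedAlong ((MonoidHom.snd E D).comp (conjPullback φ β x).subtype) (fun c ↦ θ c.1.1) d =
      (Nat.card (conjPullback φ β x) : k)⁻¹ * mackeySum φ β θ d x := by
  rw [inducedAlong_apply, mackeySum]
  congr 1
  refine Finset.sum_congr rfl fun y _ ↦ ?_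
  rw [← Finset.sum_filter, ← Finset.sum_filter]
  refine Finset.sum_bij' (fun c _ ↦ c.1.1) (fun e he ↦
    ⟨(e, y * d * y⁻¹), mem_conjPullback.mpr (Finset.mem_filter.mp he).2⟩) ?_ ?_ ?_ ?_ ?_
  · rintro ⟨⟨e, d'⟩, hc⟩ h
    obtain rfl : d' = y * d * y⁻¹ := (Finset.mem_filter.mp h).2
    exact Finset.mem_filter.mpr ⟨Finset.mem_univ _, mem_conjPullback.mp hc⟩
  · exact fun e _ ↦ Finset.mem_filter.mpr ⟨Finset.mem_univ _, rfl⟩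
  · rintro ⟨⟨e, d'⟩, hc⟩ h
    obtain rfl : d' = y * d * y⁻¹ := (Finset.mem_filter.mp h).2
    rfl
  · exact fun e _ ↦ rfl
  · exact fun c _ ↦ rfl

lemma mackeySum_smul (φ : E →* G) (β : D →* G) {θ : E → k}
    (hθ : ∀ e' e, θ (e' * e * e'⁻¹) = θ e) (d : D) (c : E × D) (x : G) :
    mackeySum φ β θ d (φ c.1 * x * (β c.2)⁻¹) = mackeySum φ β θ d x := by
  symm
  refine Fintype.sum_equiv (Equiv.mulLeft c.2) _ _ fun y ↦
    Fintype.sum_equiv (MulAut.conj c.1).toEquiv _ _ fun e ↦ ?_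
  have conj_rhs : φ c.1 * x * (β c.2)⁻¹ * β (c.2 * y * d * (c.2 * y)⁻¹) *
      (φ c.1 * x * (β c.2)⁻¹)⁻¹ = φ c.1 * (x * β (y * d * y⁻¹) * x⁻¹) * (φ c.1)⁻¹ := by
    simp [mul_assoc]
  have conj_iff : φ (c.1 * e * c.1⁻¹) = φ c.1 * x * (β c.2)⁻¹ * β (c.2 * y * d * (c.2 * y)⁻¹) *
      (φ c.1 * x * (β c.2)⁻¹)⁻¹ ↔ φ e = x * β (y * d * y⁻¹) * x⁻¹ := by
    rw [conj_rhs, map_mul, map_mul, map_inv, mul_left_inj, mul_right_inj]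
  exact (if_congr conj_iff (hθ _ _) rfl).symm

/-- **Mackey's formula**: `s` is a set of representatives of the double cosets. -/
theorem exists_inducedAlong_comp_eq_sum [CharZero k] [Fintype G] (φ : E →* G) (β : D →* G)
    {θ : E → k} (hθ : ∀ e' e, θ (e' * e * e'⁻¹) = θ e) :
    ∃ s : Finset G, inducedAlong φ θ ∘ β = ∑ x ∈ s,
      inducedAlong ((MonoidHom.snd E D).comp (conjPullback φ β x).subtype) fun c ↦ θ c.1.1 := by
  let := doubleCosetAction φ β
  refine ⟨Finset.univ.image
    (Quotient.out : MulAction.orbitRel.Quotient (E × D) G → G), funext fun d ↦ ?_⟩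
  rw [Finset.sum_image Quotient.out_injective.injOn, Finset.sum_apply, Function.comp_apply,
    inducedAlong_map_eq_sum_mackeySum,
    card_inv_mul_sum_eq_sum_orbits (K := E × D) _ (mackeySum_smul φ β hθ d)]
  refine Finset.sum_congr rfl fun ω _ ↦ ?_
  rw [inducedAlong_conjPullback_apply, stabilizer_doubleCosetAction]

end Mackey

lemma trace_compLeft_comp_funLeft {R X M : Type*} [CommRing R] [Fintype X] [AddCommGroup M]
    [Module R M] [Module.Free R M] [Module.Finite R M] (A : M →ₗ[R] M) (s : X → X) :
    LinearMap.trace R (X → M) (A.compLeft X ∘ₗ LinearMap.funLeft R M s) =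
      ∑ x, if s x = x then LinearMap.trace R M A else 0 := by
  let b := Module.Free.chooseBasis R M
  rw [LinearMap.trace_eq_matrix_trace R (Pi.basis fun _ : X ↦ b),
    LinearMap.trace_eq_matrix_trace R b A]
  simp only [Matrix.trace, Matrix.diag, LinearMap.toMatrix_apply, Fintype.sum_sigma]
  refine Finset.sum_congr rfl fun x _ ↦ ?_
  split_ifs with h
  · simp [Pi.basis_repr, h, Pi.basis_apply, LinearMap.funLeft]
  · simp [Pi.basis_repr, h, Pi.basis_apply, LinearMap.funLeft]

lemma trace_restrict_eq_trace_comp_of_isProj {V : Type*} [AddCommGroup V] [Module k V]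
    [FiniteDimensional k V] {p : Submodule k V} {π T : V →ₗ[k] V} (hπ : LinearMap.IsProj p π)
    (hT : ∀ v ∈ p, T v ∈ p) :
    LinearMap.trace k p (T.restrict hT) = LinearMap.trace k V (T ∘ₗ π) := by
  rw [← LinearMap.trace_restrict_eq_of_forall_mem p (T ∘ₗ π) fun v ↦ hT _ (hπ.map_mem v)]
  congr 1
  ext v
  simp [LinearMap.restrict_apply, hπ.map_id v v.2]

section Coinduction

variable [Fintype E] {V : Type*} [AddCommGroup V] [Module k V] (φ : E →* G)
  (ρ : Representation k E V)

/-- The averaging projection of the functions `G → V` onto the coinduced subspace of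
`E`-equivariant functions. -/
noncomputable def coindProj : (G → V) →ₗ[k] G → V :=
  (Nat.card E : k)⁻¹ • ∑ e : E, (ρ e).compLeft G ∘ₗ LinearMap.funLeft k V ((φ e)⁻¹ * ·)

lemma coindProj_apply (f : G → V) (x : G) :
    coindProj φ ρ f x = (Nat.card E : k)⁻¹ • ∑ e : E, ρ e (f ((φ e)⁻¹ * x)) := by
  simp [coindProj, LinearMap.funLeft]

lemma isProj_coindProj [CharZero k] :
    LinearMap.IsProj (Representation.coindV φ ρ) (coindProj φ ρ) where
  map_mem f e x := by
    rw [coindProj_apply, coindProj_apply, map_smul, map_sum]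
    congr 1
    symm
    refine Fintype.sum_equiv (Equiv.mulLeft e) _ _ fun e' ↦ ?_
    simp [mul_assoc]
  map_id f hf := by
    have hE : (Nat.card E : k) ≠ 0 := Nat.cast_ne_zero.mpr Nat.card_pos.ne'
    funext x
    have summand_eq (e : E) : ρ e (f ((φ e)⁻¹ * x)) = f x := by
      rw [← hf, mul_inv_cancel_left]
    rw [coindProj_apply, Finset.sum_congr rfl fun e _ ↦ summand_eq e, Finset.sum_const,
      Finset.card_univ, ← Nat.card_eq_fintype_card, ← Nat.cast_smul_eq_nsmul k,
      inv_smul_smul₀ hE]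

theorem character_coind [CharZero k] [Fintype G] [FiniteDimensional k V] :
    (Representation.coind φ ρ).character = inducedAlong φ ρ.character := by
  funext g
  have fixed_iff (e : E) (x : G) : (φ e)⁻¹ * (x * g) = x ↔ φ e = x * g * x⁻¹ := by
    rw [inv_mul_eq_iff_eq_mul, eq_mul_inv_iff_mul_eq, eq_comm]
  have trace_summand (e : E) : LinearMap.trace k (G → V) (LinearMap.funLeft k V (· * g) ∘ₗ
      (ρ e).compLeft G ∘ₗ LinearMap.funLeft k V ((φ e)⁻¹ * ·)) =
        ∑ x : G, if φ e = x * g * x⁻¹ then ρ.character e else 0 := by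
    simp only [← fixed_iff]
    exact trace_compLeft_comp_funLeft (ρ e) fun x ↦ (φ e)⁻¹ * (x * g)
  have comp_coindProj : LinearMap.funLeft k V (· * g) ∘ₗ coindProj φ ρ = (Nat.card E : k)⁻¹ •
      ∑ e : E, LinearMap.funLeft k V (· * g) ∘ₗ
        (ρ e).compLeft G ∘ₗ LinearMap.funLeft k V ((φ e)⁻¹ * ·) := by
    ext
    simp [coindProj, LinearMap.funLeft]
  calc (Representation.coind φ ρ).character g
      = LinearMap.trace k (G → V) (LinearMap.funLeft k V (· * g) ∘ₗ coindProj φ ρ) :=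
        trace_restrict_eq_trace_comp_of_isProj (T := LinearMap.funLeft k V (· * g))
          (isProj_coindProj φ ρ) fun f hf ↦ ((Representation.coind φ ρ g) ⟨f, hf⟩).2
    _ = (Nat.card E : k)⁻¹ * ∑ e : E, ∑ x : G,
          if φ e = x * g * x⁻¹ then ρ.character e else 0 := by
        simp only [comp_coindProj, map_smul, smul_eq_mul, map_sum, trace_summand]
    _ = inducedAlong φ ρ.character g := by rw [Finset.sum_comm, inducedAlong_apply]

end Coinduction

section Decomposition

lemma character_eq_add_of_isCompl {M V : Type*} [Monoid M] [AddCommGroup V] [Module k V]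
    [FiniteDimensional k V] {ρ : Representation k M V} {a b : Subrepresentation ρ}
    (h : IsCompl a.toSubmodule b.toSubmodule) :
    ρ.character = a.toRepresentation.character + b.toRepresentation.character := by
  funext g
  let N : Fin 2 → Submodule k V := ![a.toSubmodule, b.toSubmodule]
  have isInternal : DirectSum.IsInternal N := by
    rw [DirectSum.isInternal_submodule_iff_isCompl N (i := 0) (j := 1) (by simp)
      (by ext i; fin_cases i <;> simp)]
    exact h
  have mapsTo : ∀ i, Set.MapsTo (ρ g) (N i) (N i) :=
    Fin.forall_fin_two.mpr ⟨a.apply_mem_toSubmodule g, b.apply_mem_toSubmodule g⟩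
  exact (LinearMap.trace_eq_sum_trace_restrict isInternal mapsTo).trans (Fin.sum_univ_two _)

lemma exists_isCompl_finrank_lt_of_not_isIrreducible [Finite G] [CharZero k] {V : Type*}
    [AddCommGroup V] [Module k V] [FiniteDimensional k V] [Nontrivial V]
    {ρ : Representation k G V} (hρ : ¬ ρ.IsIrreducible) :
    ∃ a b : Subrepresentation ρ, IsCompl a.toSubmodule b.toSubmodule ∧
      Module.finrank k a.toSubmodule < Module.finrank k V ∧
      Module.finrank k b.toSubmodule < Module.finrank k V := by
  have : Nontrivial (Subrepresentation ρ) :=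
    ⟨⊥, ⊤, fun h ↦ bot_ne_top (α := Submodule k V) (congrArg Subrepresentation.toSubmodule h)⟩
  obtain ⟨a, ha_bot, ha_top⟩ : ∃ a : Subrepresentation ρ, a ≠ ⊥ ∧ a ≠ ⊤ := by
    by_contra! h
    exact hρ ⟨fun a ↦ or_iff_not_imp_left.mpr (h a)⟩
  obtain ⟨b, hab⟩ := exists_isCompl a
  have hc : IsCompl a.toSubmodule b.toSubmodule := by
    refine .of_eq ?_ ?_
    · rw [← Subrepresentation.toSubmodule_inf, hab.inf_eq_bot]
      rfl
    · rw [← Subrepresentation.toSubmodule_sup, hab.sup_eq_top]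
      rfl
  have ha_lt : Module.finrank k a.toSubmodule < Module.finrank k V :=
    Submodule.finrank_lt fun h ↦ ha_top (Subrepresentation.toSubmodule_injective h)
  have ha_pos : Module.finrank k a.toSubmodule ≠ 0 := fun h ↦
    ha_bot (Subrepresentation.toSubmodule_injective (Submodule.finrank_eq_zero.mp h))
  have := Submodule.finrank_add_eq_of_isCompl hc
  exact ⟨a, b, hc, ha_lt, by omega⟩

lemma isIrreducibleCharacter_of_isIrreducible {G V : Type} [Group G] [Finite G] [AddCommGroup V]
    [Module ℂ V] [FiniteDimensional ℂ V] (ρ : Representation ℂ G V) [ρ.IsIrreducible] :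
    IsIrreducibleCharacter ρ.character := by
  have := Fintype.ofFinite G
  have hG : (Nat.card G : ℂ) ≠ 0 := Nat.cast_ne_zero.mpr Nat.card_pos.ne'
  have := invertibleOfNonzero hG
  have norm_one := Representation.char_orthonormal ρ ρ
  rw [if_pos ⟨Representation.Equiv.refl ρ⟩, inv_mul_eq_one₀ hG] at norm_one
  exact ⟨FDRep.of ρ, (FDRep.simple_iff_char_is_norm_one _).mpr norm_one.symm, rfl⟩

theorem character_mem_closure_isIrreducibleCharacter {G V : Type} [Group G] [Finite G]
    [AddCommGroup V] [Module ℂ V] [FiniteDimensional ℂ V] (ρ : Representation ℂ G V) :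
    ρ.character ∈ AddSubmonoid.closure {χ : G → ℂ | IsIrreducibleCharacter χ} := by
  induction hn : Module.finrank ℂ V using Nat.strong_induction_on generalizing V with
  | _ n ih =>
  by_cases hρ : ρ.IsIrreducible
  · exact AddSubmonoid.subset_closure (isIrreducibleCharacter_of_isIrreducible ρ)
  rcases subsingleton_or_nontrivial V with hV | hV
  · have character_eq_zero : ρ.character = 0 := funext fun g ↦ by
      simp [Representation.character, Subsingleton.elim (ρ g) 0]
    rw [character_eq_zero]
    exact zero_mem _
  · obtain ⟨a, b, hab, ha, hb⟩ := exists_isCompl_finrank_lt_of_not_isIrreducible hρ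
    rw [character_eq_add_of_isCompl hab]
    exact add_mem (ih _ (hn ▸ ha) _ rfl) (ih _ (hn ▸ hb) _ rfl)

end Decomposition

section InducedSums

/-- Sums of characters induced from arbitrary characters of subgroups whose order is a divisor of
`M / c`. The order bound is stated as a divisibility because `c` need not divide `M`. -/
def sumsInducedOfCardMulDvd (G : Type) [Group G] [Fintype G] (c M : ℕ) : AddSubmonoid (G → ℂ) :=
  AddSubmonoid.closure {f | ∃ (Q : Subgroup G) (V : FDRep ℂ Q),
    Nat.card Q * c ∣ M ∧ f = inducedAlong Q.subtype V.character}

/-- Sums of characters induced from irreducible characters of subgroups of index `c`. -/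
def sumsInducedOfIndexEq (G : Type) [Group G] [Fintype G] (c : ℕ) : AddSubmonoid (G → ℂ) :=
  AddSubmonoid.closure {f | ∃ (Q : Subgroup G) (lam : Q → ℂ),
    IsIrreducibleCharacter lam ∧ c = Q.index ∧ f = inducedChar Q lam}

lemma sumInducedProperty_iff_comp_subtype_mem {p : ℕ} {G : Type} [Group G] [Fintype G]
    {P : Subgroup G} {χ : G → ℂ} {d : ℕ} :
    SumInducedProperty p P χ d ↔
      χ ∘ P.subtype ∈ sumsInducedOfIndexEq P (p ^ d.factorization p) := by
  constructor
  · rintro ⟨n, Q, lam, hlam, hindex, hχ⟩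
    have : χ ∘ P.subtype = ∑ i, inducedChar (Q i) (lam i) := funext fun x ↦ by
      rw [Finset.sum_apply]
      exact hχ x
    rw [this]
    exact sum_mem fun i _ ↦ AddSubmonoid.subset_closure ⟨Q i, lam i, hlam i, hindex i, rfl⟩
  · intro h
    obtain ⟨l, hl, hsum⟩ := AddSubmonoid.exists_list_of_mem_closure h
    choose! Q lam hlam hindex hind using hl
    refine ⟨l.length, fun i ↦ Q l[i], fun i ↦ lam l[i], fun i ↦ hlam _ (by simp),
      fun i ↦ hindex _ (by simp), fun x ↦ ?_⟩
    have hsum' : χ ∘ P.subtype = ∑ i : Fin l.length, l[i] := by simp [hsum]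
    calc χ x = (∑ i : Fin l.length, l[i]) x := congrFun hsum' x
      _ = ∑ i : Fin l.length, inducedChar (Q l[i]) (lam l[i]) x := by
          rw [Finset.sum_apply]
          exact Finset.sum_congr rfl fun i _ ↦ congrFun (hind _ (by simp)) x

variable {E D G : Type} [Group E] [Group D] [Group G] [Fintype E] [Fintype D] [Fintype G] {c M : ℕ}

lemma exists_inducedAlong_character_eq (φ : E →* G) (V : FDRep ℂ E) :
    ∃ W : FDRep ℂ G, W.character = inducedAlong φ V.character :=
  ⟨FDRep.of (Representation.coind φ V.ρ), character_coind φ V.ρ⟩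

lemma inducedAlong_character_mem_sumsInducedOfCardMulDvd (φ : E →* G) (V : FDRep ℂ E)
    (h : Nat.card E * c ∣ M) :
    inducedAlong φ V.character ∈ sumsInducedOfCardMulDvd G c M := by
  obtain ⟨W, hW⟩ := exists_inducedAlong_character_eq φ.rangeRestrict V
  have : inducedAlong φ V.character = inducedAlong φ.range.subtype W.character := by
    rw [hW, inducedAlong_inducedAlong, MonoidHom.subtype_comp_rangeRestrict]
  exact AddSubmonoid.subset_closure
    ⟨φ.range, W, (mul_dvd_mul_right (Subgroup.card_range_dvd φ) c).trans h, by convert this⟩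

lemma inducedAlong_mem_sumsInducedOfCardMulDvd (ι : D →* G) {f : D → ℂ}
    (hf : f ∈ sumsInducedOfCardMulDvd D c M) :
    inducedAlong ι f ∈ sumsInducedOfCardMulDvd G c M := by
  refine (AddSubmonoid.closure_le
    (S := (sumsInducedOfCardMulDvd G c M).comap (inducedAlong ι))).mpr ?_ hf
  rintro _ ⟨Q, V, hQ, rfl⟩
  change inducedAlong ι (inducedAlong Q.subtype V.character) ∈ sumsInducedOfCardMulDvd G c M
  rw [inducedAlong_inducedAlong]
  exact inducedAlong_character_mem_sumsInducedOfCardMulDvd _ V hQ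

lemma comp_mem_sumsInducedOfCardMulDvd {β : D →* G} (hβ : Function.Injective β) {f : G → ℂ}
    (hf : f ∈ sumsInducedOfCardMulDvd G c M) : f ∘ β ∈ sumsInducedOfCardMulDvd D c M := by
  refine (AddSubmonoid.closure_le
    (S := (sumsInducedOfCardMulDvd D c M).comap (LinearMap.funLeft ℂ ℂ β))).mpr ?_ hf
  rintro _ ⟨Q, V, hQ, rfl⟩
  change inducedAlong Q.subtype V.character ∘ β ∈ sumsInducedOfCardMulDvd D c M
  obtain ⟨s, hs⟩ := exists_inducedAlong_comp_eq_sum Q.subtype β fun e' e ↦ V.char_conj e e'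
  rw [hs]
  refine sum_mem fun x _ ↦ ?_
  let π := (MonoidHom.fst Q D).comp (conjPullback Q.subtype β x).subtype
  have card_dvd : Nat.card (conjPullback Q.subtype β x) ∣ Nat.card Q :=
    Subgroup.card_dvd_of_injective π (fst_injective_conjPullback Q.subtype hβ x)
  exact inducedAlong_character_mem_sumsInducedOfCardMulDvd _ (FDRep.of (V.ρ.comp π))
    ((mul_dvd_mul_right card_dvd c).trans hQ)

lemma sumsInducedOfIndexEq_le_sumsInducedOfCardMulDvd (c : ℕ) :
    sumsInducedOfIndexEq G c ≤ sumsInducedOfCardMulDvd G c (Nat.card G) := by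
  refine AddSubmonoid.closure_mono ?_
  rintro _ ⟨Q, _, ⟨V, -, rfl⟩, rfl, rfl⟩
  exact ⟨Q, V, Q.card_mul_index.dvd, inducedChar_eq_inducedAlong Q _⟩

lemma sumsInducedOfCardMulDvd_le_of_mul_eq {c' M' : ℕ} (hc : 0 < c) (h : M * c' = M' * c) :
    sumsInducedOfCardMulDvd G c M ≤ sumsInducedOfCardMulDvd G c' M' := by
  refine AddSubmonoid.closure_mono ?_
  rintro _ ⟨Q, V, hQ, rfl⟩
  refine ⟨Q, V, Nat.dvd_of_mul_dvd_mul_right hc ?_, rfl⟩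
  rw [← h, mul_right_comm]
  exact mul_dvd_mul_right hQ c'

lemma exists_le_index_eq_of_dvd_index {p : ℕ} [Fact p.Prime] {P : Type*} [Group P] [Finite P]
    (hP : IsPGroup p P) {Q : Subgroup P} {c : ℕ} (hc : c ∣ Q.index) :
    ∃ R, Q ≤ R ∧ R.index = c := by
  obtain ⟨t, ht⟩ := hc
  have card_eq : Nat.card P = Nat.card Q * t * c := by
    rw [← Q.card_mul_index, ht, mul_comm c, mul_assoc]
  obtain ⟨n, hn⟩ := IsPGroup.iff_card.mp hP
  obtain ⟨a, ha⟩ := IsPGroup.iff_card.mp (hP.to_subgroup Q)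
  obtain ⟨m, -, hm⟩ := (Nat.dvd_prime_pow Fact.out).mp
    (hn ▸ card_eq ▸ dvd_mul_right _ c : Nat.card Q * t ∣ p ^ n)
  have ham : a ≤ m := by
    rw [← Nat.pow_dvd_pow_iff_le_right (Fact.out : p.Prime).one_lt, ← ha, ← hm]
    exact dvd_mul_right _ t
  obtain ⟨R, hR, hQR⟩ := Sylow.exists_subgroup_card_pow_prime_le p
    (hm ▸ card_eq ▸ dvd_mul_right _ c) Q ha ham
  refine ⟨R, hQR, Nat.eq_of_mul_eq_mul_left Nat.card_pos (R.card_mul_index.trans ?_)⟩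
  rw [card_eq, hm, hR]

lemma inducedAlong_character_mem_sumsInducedOfIndexEq (Q : Subgroup G) (V : FDRep ℂ Q) :
    inducedAlong Q.subtype V.character ∈ sumsInducedOfIndexEq G Q.index := by
  refine (AddSubmonoid.closure_le
    (S := (sumsInducedOfIndexEq G Q.index).comap (inducedAlong Q.subtype))).mpr ?_
    (character_mem_closure_isIrreducibleCharacter V.ρ)
  intro lam hlam
  exact AddSubmonoid.subset_closure ⟨Q, lam, hlam, rfl, (inducedChar_eq_inducedAlong Q lam).symm⟩

lemma sumsInducedOfCardMulDvd_le_sumsInducedOfIndexEq {p : ℕ} [Fact p.Prime]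
    (hG : IsPGroup p G) (c : ℕ) :
    sumsInducedOfCardMulDvd G c (Nat.card G) ≤ sumsInducedOfIndexEq G c := by
  refine AddSubmonoid.closure_le.mpr ?_
  rintro _ ⟨Q, V, hQ, rfl⟩
  rw [← Q.card_mul_index] at hQ
  obtain ⟨R, hQR, rfl⟩ := exists_le_index_eq_of_dvd_index hG
    (Nat.dvd_of_mul_dvd_mul_left Nat.card_pos hQ)
  obtain ⟨W, hW⟩ := exists_inducedAlong_character_eq (Subgroup.inclusion hQR) V
  have : inducedAlong Q.subtype V.character = inducedAlong R.subtype W.character := by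
    rw [hW, inducedAlong_inducedAlong, Subgroup.subtype_comp_inclusion]
  rw [this]
  exact inducedAlong_character_mem_sumsInducedOfIndexEq R W

lemma inducedAlong_comp_mem_of_forall_sylow {p : ℕ} {φ : E →* G} (hφ : Function.Injective φ)
    {β : D →* G} (hβ : Function.Injective β) (hD : IsPGroup p D) {θ : E → ℂ}
    (hθ_conj : ∀ e' e, θ (e' * e * e'⁻¹) = θ e)
    (hθ : ∀ S : Sylow p E, θ ∘ (S : Subgroup E).subtype ∈ sumsInducedOfCardMulDvd S c M) :
    inducedAlong φ θ ∘ β ∈ sumsInducedOfCardMulDvd D c M := by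
  obtain ⟨s, hs⟩ := exists_inducedAlong_comp_eq_sum φ β hθ_conj
  rw [hs]
  refine sum_mem fun x _ ↦ inducedAlong_mem_sumsInducedOfCardMulDvd _ ?_
  let π := (MonoidHom.fst E D).comp (conjPullback φ β x).subtype
  have hπ : Function.Injective π := fst_injective_conjPullback φ hβ x
  have isPGroup_range : IsPGroup p π.range :=
    (hD.of_injective _ (snd_injective_conjPullback hφ β x)).of_surjective π.rangeRestrict
      π.rangeRestrict_surjective
  obtain ⟨S, hS⟩ := isPGroup_range.exists_le_sylow
  let πS : conjPullback φ β x →* S := π.codRestrict S fun c ↦ hS ⟨c, rfl⟩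
  have hπS : Function.Injective πS := fun c c' h ↦ hπ (congrArg Subtype.val h)
  exact comp_mem_sumsInducedOfCardMulDvd hπS (hθ S)

end InducedSums

section Degrees

lemma finrank_eq_index_mul_finrank {G : Type*} [Group G] [Fintype G] {H : Subgroup G}
    {V : FDRep ℂ G} {W : FDRep ℂ H} (h : V.character = inducedChar H W.character) :
    Module.finrank ℂ V = H.index * Module.finrank ℂ W := by
  have := congrFun h 1
  rw [inducedChar_one, FDRep.char_one, FDRep.char_one] at this
  exact_mod_cast this

lemma card_sylow_mul_pow_factorization {p : ℕ} [Fact p.Prime] {H : Subgroup G} [Finite G]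
    (P : Sylow p G) (S : Sylow p H) {n : ℕ} (hn : n ≠ 0) :
    Nat.card S * p ^ (H.index * n).factorization p = Nat.card P * p ^ n.factorization p := by
  rw [S.card_eq_multiplicity, P.card_eq_multiplicity, ← pow_add, ← pow_add, ← H.card_mul_index,
    Nat.factorization_mul Subgroup.index_ne_zero_of_finite hn,
    Nat.factorization_mul Nat.card_pos.ne' Subgroup.index_ne_zero_of_finite]
  simp only [Finsupp.add_apply, add_assoc]

lemma nontrivial_of_simple {M : Type*} [Monoid M] (V : FDRep k M) [CategoryTheory.Simple V] :
    Nontrivial V := by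
  by_contra h
  rw [not_nontrivial_iff_subsingleton] at h
  refine CategoryTheory.id_nonzero V ?_
  ext v
  exact Subsingleton.elim _ _

end Degrees

end

theorem imprimitive_reduction_general
    (p : ℕ) [Fact p.Prime] {G : Type} [Group G] [Fintype G] (P : Sylow p G)
    (V : FDRep ℂ G) {H : Subgroup G} (W : FDRep ℂ H) [Nontrivial W]
    (hV : V.character = inducedChar H W.character)
    (hW : ∀ S : Sylow p H, SumInducedProperty p (S : Subgroup H) W.character (Module.finrank ℂ W)) :
    SumInducedProperty p (P : Subgroup G) V.character (Module.finrank ℂ V) := by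
  have restrict_mem (S : Sylow p H) : W.character ∘ (S : Subgroup H).subtype ∈
      sumsInducedOfCardMulDvd S (p ^ (Module.finrank ℂ V).factorization p) (Nat.card P) := by
    refine sumsInducedOfCardMulDvd_le_of_mul_eq (pow_pos (Fact.out : p.Prime).pos _) ?_
      (sumsInducedOfIndexEq_le_sumsInducedOfCardMulDvd _
        (sumInducedProperty_iff_comp_subtype_mem.mp (hW S)))
    rw [finrank_eq_index_mul_finrank hV]
    exact card_sylow_mul_pow_factorization P S Module.finrank_pos.ne'
  rw [sumInducedProperty_iff_comp_subtype_mem]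
  refine sumsInducedOfCardMulDvd_le_sumsInducedOfIndexEq P.isPGroup' _ ?_
  rw [hV, inducedChar_eq_inducedAlong]
  exact inducedAlong_comp_mem_of_forall_sylow H.subtype_injective
    (P : Subgroup G).subtype_injective P.isPGroup' (fun h' h ↦ W.char_conj h h') restrict_mem

theorem imprimitive_reduction
    (p : ℕ) [Fact p.Prime] (G : Type) [Group G] [Fintype G]
    (P : Sylow p G) (V : FDRep ℂ G) (hV : CategoryTheory.Simple V)
    -- `χ = V.character` is imprimitive: induced from a proper subgroup.
    (himpr : ∃ (H : Subgroup G), H ≠ ⊤ ∧ ∃ (ψ : ↥H → ℂ),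
      IsIrreducibleCharacter ψ ∧ ∀ g : G, V.character g = inducedChar H ψ g)
    -- the conclusion of the theorem holds for all proper subgroups of `G`:
    (hsub : ∀ (K : Subgroup G), K ≠ ⊤ → ∀ (S : Sylow p ↥K) (W : FDRep ℂ ↥K),
      CategoryTheory.Simple W →
        SumInducedProperty p (S : Subgroup ↥K) W.character (Module.finrank ℂ W)) :
    SumInducedProperty p (P : Subgroup G) V.character (Module.finrank ℂ V) := by
  obtain ⟨H, hH, _, ⟨W, hW, rfl⟩, hVW⟩ := himpr
  have := nontrivial_of_simple W
  exact imprimitive_reduction_general p P V W (funext hVW) fun S ↦ hsub H hH S W hW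
end

section
/- Let p be a prime, G a finite group, and N a normal subgroup of G such that p does not divide the index |G : N|. Let P be a Sylow p-subgroup of G (so that P ≤ N and P is a Sylow p-subgroup of N). Assume that for every irreducible character ψ of N, the restriction ψ_P is a sum of characters of the form λ^P induced from irreducible characters λ of subgroups Q ≤ P with ψ(1)_p = |P : Q|. Then for every irreducible character χ of G, the restriction χ_P is a sum of characters of the form λ^P induced from irreducible characters λ of subgroups Q ≤ P with χ(1)_p = |P : Q|. -/
open scoped Classical

/-!
By Clifford's theorem the irreducible constituents of `χ_N` have a common degree `ψ(1)`, so
`χ(1) = e ψ(1)`, where `e` is the number of constituents counted with multiplicity. The crux is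
that `χ(1)` divides `|G : N| ψ(1)`: then `e` divides `|G : N|` and is prime to `p`, so all the
constituents have the same `p`-part of the degree as `χ`, and summing their decompositions over `P`
gives one for `χ_P`.

For the divisibility, let `V` afford `χ` and let `W` be a constituent of its restriction to `N`.
The inertia group of `W` acts only projectively on `Hom_N(W, V)`. The pairs `(g, u)`, where `u` is
an operator on `W` implementing conjugation by `g`, do act linearly, and those acting with
determinant one form a finite group that still covers the inertia group. The central operator
`∑ χ(g⁻¹) g` acts on `V` as the scalar `|G| / χ(1)`. Summing it over each coset of `N` separately
shows that `|G : N| ψ(1) / χ(1)` acts on `Hom_N(W, V)` as a combination of elements of this finite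
group whose coefficients are traces of elements of that group, hence algebraic integers. So it is
itself an algebraic integer.
-/

open Representation Module
open scoped MonoidAlgebra

/-! ### Irreducible representations -/

section Irreducible

variable {k G V W : Type*} [Field k] [Group G] [AddCommGroup V] [Module k V]
  [AddCommGroup W] [Module k W]

theorem isIrreducible_comp_of_surjective {H : Type*} [Group H] (ρ : Representation k G V)
    [ρ.IsIrreducible] {f : H →* G} (hf : Function.Surjective f) :
    IsIrreducible (ρ.comp f) := by
  let e : Subrepresentation (ρ.comp f) ≃o Subrepresentation ρ :=
    { toFun U := ⟨U.toSubmodule, hf.forall.2 U.apply_mem_toSubmodule⟩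
      invFun U := ⟨U.toSubmodule, fun h => U.apply_mem_toSubmodule (f h)⟩
      map_rel_iff' := Iff.rfl }
  exact e.isSimpleOrder_iff.2 inferInstance

theorem nontrivial_of_isIrreducible (ρ : Representation k G V) [ρ.IsIrreducible] :
    Nontrivial V := by
  by_contra h
  rw [not_nontrivial_iff_subsingleton] at h
  exact bot_ne_top (Subrepresentation.toSubmodule_injective
    (Subsingleton.elim (⊥ : Subrepresentation ρ).toSubmodule ⊤))

theorem isIrreducible_toRepresentation_of_isAtom {ρ : Representation k G V}
    {U : Subrepresentation ρ} (hU : IsAtom U) : U.toRepresentation.IsIrreducible where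
  exists_pair_ne := by
    refine ⟨⊥, ⊤, fun h => hU.1 (eq_bot_iff.2 fun u hu => ?_)⟩
    have hmem : (⟨u, hu⟩ : U.toSubmodule) ∈ (⊥ : Subrepresentation U.toRepresentation) :=
      h ▸ Submodule.mem_top
    exact congrArg Subtype.val hmem
  eq_bot_or_eq_top S := by
    let image : Subrepresentation ρ := ⟨S.toSubmodule.map U.toSubmodule.subtype, by
      rintro g _ ⟨u, hu, rfl⟩
      exact ⟨_, S.apply_mem_toSubmodule g hu, rfl⟩⟩
    have hle : image ≤ U := by
      rintro _ ⟨u, -, rfl⟩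
      exact u.2
    have hinj := Submodule.map_injective_of_injective U.toSubmodule.injective_subtype
    refine (hU.le_iff.1 hle).imp (fun h => ?_) fun h => ?_
    · refine Subrepresentation.toSubmodule_injective (hinj ?_)
      exact (congrArg Subrepresentation.toSubmodule h).trans (Submodule.map_bot _).symm
    · refine Subrepresentation.toSubmodule_injective (hinj ?_)
      exact (congrArg Subrepresentation.toSubmodule h).trans (Submodule.map_subtype_top _).symm

theorem exists_isInternal_isIrreducible [Finite G]
    [NeZero (Nat.card G : k)] [FiniteDimensional k V] (ρ : Representation k G V) :
    ∃ (n : ℕ) (U : Fin n → Subrepresentation ρ), (∀ i, (U i).toRepresentation.IsIrreducible) ∧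
      DirectSum.IsInternal fun i => (U i).toSubmodule := by
  obtain ⟨s, hind, htop, hsimple⟩ :=
    IsSemisimpleModule.exists_sSupIndep_sSup_simples_eq_top k[G] ρ.asModule
  have : Module.Finite k ρ.asModule := ‹FiniteDimensional k V›
  have : Module.Finite k[G] ρ.asModule := Module.Finite.of_restrictScalars_finite k k[G] _
  have : Finite s := WellFoundedGT.finite_of_sSupIndep hind
  let e := (Finite.equivFin s).symm
  refine ⟨Nat.card s, fun i => Subrepresentation.ofSubmodule' (e i).1, fun i => ?_, ?_⟩
  · have hatom : IsAtom (e i).1 := isSimpleModule_iff_isAtom.1 (hsimple _ (e i).2)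
    exact isIrreducible_toRepresentation_of_isAtom
      ((Subrepresentation.subrepresentationSubmoduleOrderIso.symm.isAtom_iff _).2 hatom)
  · have hinternal : DirectSum.IsInternal fun i => (e i).1 := by
      refine DirectSum.isInternal_submodule_of_iSupIndep_of_iSup_eq_top ?_ ?_
      · exact ((sSupIndep_iff s).1 hind).comp e.injective
      · rw [← htop, sSup_eq_iSup', e.iSup_comp (g := Subtype.val)]
    exact hinternal

theorem character_eq_sum_of_isInternal {ι : Type*} [Fintype ι] [DecidableEq ι]
    [FiniteDimensional k V] {ρ : Representation k G V} {U : ι → Subrepresentation ρ}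
    (hU : DirectSum.IsInternal fun i => (U i).toSubmodule) (g : G) :
    ρ.character g = ∑ i, (U i).toRepresentation.character g :=
  LinearMap.trace_eq_sum_trace_restrict hU fun i _ hv => (U i).apply_mem_toSubmodule g hv

theorem exists_intertwiningMap_apply_coe_eq [Finite G] [NeZero (Nat.card G : k)]
    {ρ : Representation k G V} (U : Subrepresentation ρ) :
    ∃ π : IntertwiningMap ρ U.toRepresentation, ∀ u : U.toSubmodule, π u = u := by
  let incl : IntertwiningMap U.toRepresentation ρ := ⟨U.toSubmodule.subtype, fun _ => rfl⟩
  obtain ⟨π, hπ⟩ := MonoidAlgebra.exists_leftInverse_of_injective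
    (IntertwiningMap.equivLinearMapAsModule _ _ incl)
    (LinearMap.ker_eq_bot.2 U.toSubmodule.injective_subtype)
  exact ⟨(IntertwiningMap.equivLinearMapAsModule _ _).symm π, fun u => LinearMap.congr_fun hπ u⟩

theorem exists_apply_ne_zero_of_isIrreducible (σ : Representation k G V) [σ.IsIrreducible]
    {F : V →ₗ[k] W} (hF : F ≠ 0) {v : V} (hv : v ≠ 0) : ∃ g, F (σ g v) ≠ 0 := by
  by_contra! hzero
  let K : Subrepresentation σ :=
    { toSubmodule := ⨅ g, LinearMap.ker (F ∘ₗ σ g)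
      apply_mem_toSubmodule h u hu := by
        simp only [Submodule.mem_iInf, LinearMap.mem_ker, LinearMap.comp_apply] at hu ⊢
        intro g
        rw [← Module.End.mul_apply, ← map_mul]
        exact hu (g * h) }
  have hmem (u : V) : u ∈ K ↔ ∀ g, F (σ g u) = 0 := by
    change u ∈ ⨅ g, LinearMap.ker (F ∘ₗ σ g) ↔ _
    simp [Submodule.mem_iInf]
  rcases eq_bot_or_eq_top K with hK | hK
  · exact hv (show v ∈ (⊥ : Subrepresentation σ) from hK ▸ (hmem v).2 hzero)
  · refine hF (LinearMap.ext fun u => ?_)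
    have hu := (hmem u).1 (hK ▸ Submodule.mem_top) 1
    rwa [map_one] at hu

end Irreducible

section CharacterSums

variable {k G V : Type*} [Field k] [Group G] [AddCommGroup V] [Module k V]

theorem commute_sum_char_inv_smul [Fintype G] (ρ : Representation k G V) (g : G) :
    Commute (∑ x, ρ.character x⁻¹ • ρ x) (ρ g) := by
  rw [Commute, SemiconjBy, Finset.sum_mul, Finset.mul_sum]
  refine Fintype.sum_equiv (MulAut.conj g⁻¹).toEquiv _ _ fun x => ?_
  have hconj : MulAut.conj g⁻¹ x = g⁻¹ * x * g := by simp
  have hchar : ρ.character (g⁻¹ * x * g)⁻¹ = ρ.character x⁻¹ := by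
    rw [← ρ.char_conj x⁻¹ g⁻¹]
    congr 1
    group
  rw [MulEquiv.toEquiv_eq_coe, MulEquiv.coe_toEquiv, hconj, hchar, smul_mul_assoc, mul_smul_comm,
    ← map_mul, ← map_mul]
  congr 2
  group

variable [FiniteDimensional k V]

theorem card_mul_character_toInvariants (ρ : Representation k G V) (S : Subgroup G) [S.Normal]
    [Fintype S] [NeZero (Nat.card S : k)] (g : G) :
    Nat.card S * (ρ.toInvariants S).character g = ∑ s : S, ρ.character (g * s) := by
  have hS : (Fintype.card S : k) ≠ 0 := by simpa using NeZero.ne (Nat.card S : k)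
  have := invertibleOfNonzero hS
  have := invertibleOfNonzero (NeZero.ne (Nat.card S : k))
  have hproj := isProj_averageMap (ρ.comp S.subtype)
  have hrestrict : (ρ.toInvariants S).character g =
      LinearMap.trace k V (ρ g ∘ₗ averageMap (ρ.comp S.subtype)) := by
    have hmem (v : V) : (ρ g ∘ₗ averageMap (ρ.comp S.subtype)) v ∈ invariants (ρ.comp S.subtype) :=
      ρ.le_comap_invariants S g (hproj.map_mem v)
    rw [← LinearMap.trace_restrict_eq_of_forall_mem _ _ hmem]
    refine congrArg _ (LinearMap.ext fun v => Subtype.ext ?_)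
    exact congrArg (ρ g) (hproj.map_id v v.2).symm
  have haverage : (Nat.card S : k) • averageMap (ρ.comp S.subtype) = ∑ s : S, ρ s := by
    simp [averageMap, GroupAlgebra.average, smul_inv_smul₀ hS]
  rw [hrestrict, ← smul_eq_mul, ← map_smul, ← LinearMap.comp_smul, haverage,
    ← Module.End.mul_eq_comp, Finset.mul_sum, map_sum]
  simp only [Representation.character, map_mul]

variable [IsAlgClosed k]

theorem exists_eq_smul_one_of_isIrreducible (ρ : Representation k G V)
    [ρ.IsIrreducible] {f : End k V} (hf : ∀ g, Commute f (ρ g)) : ∃ c : k, f = c • 1 := by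
  obtain ⟨c, hc⟩ :=
    (IsIrreducible.algebraMap_intertwiningMap_bijective_of_isAlgClosed (ρ := ρ)).2 ⟨f, hf⟩
  exact ⟨c, congrArg IntertwiningMap.toLinearMap hc.symm⟩

theorem finrank_smul_eq_trace_smul_one (ρ : Representation k G V)
    [ρ.IsIrreducible] {f : End k V} (hf : ∀ g, Commute f (ρ g)) :
    (finrank k V : k) • f = LinearMap.trace k V f • (1 : End k V) := by
  obtain ⟨c, rfl⟩ := exists_eq_smul_one_of_isIrreducible ρ hf
  rw [map_smul, LinearMap.trace_one, smul_smul, smul_eq_mul, mul_comm]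

theorem sum_character_mul_character_inv [CharZero k] [Fintype G] (ρ : Representation k G V)
    [ρ.IsIrreducible] : ∑ g, ρ.character g * ρ.character g⁻¹ = Nat.card G := by
  have := invertibleOfNonzero (NeZero.ne (Nat.card G : k))
  have h := char_orthonormal ρ ρ
  rwa [if_pos ⟨.refl _⟩, inv_mul_eq_one₀ (NeZero.ne _), eq_comm] at h

theorem trace_sum_char_inv_smul [CharZero k] [Fintype G] (ρ : Representation k G V)
    [ρ.IsIrreducible] : LinearMap.trace k V (∑ x, ρ.character x⁻¹ • ρ x) = Nat.card G := by
  rw [← sum_character_mul_character_inv ρ, map_sum]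
  refine Finset.sum_congr rfl fun x _ => ?_
  rw [map_smul, smul_eq_mul, mul_comm]
  rfl

end CharacterSums

section FDRep

open CategoryTheory

universe u

variable {k G : Type u} [Field k] [Group G]

theorem isIrreducible_of_simple (V : FDRep k G) [Simple V] :
    IsIrreducible (V := V) V.ρ where
  exists_pair_ne := by
    refine ⟨⊥, ⊤, fun h => id_nonzero V ?_⟩
    ext v
    exact (h ▸ Submodule.mem_top : v ∈ (⊥ : Subrepresentation (W := V) V.ρ))
  eq_bot_or_eq_top U := by
    let incl : FDRep.of U.toRepresentation ⟶ V :=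
      ⟨FGModuleCat.ofHom U.toSubmodule.subtype, fun g => rfl⟩
    have : Mono incl := ConcreteCategory.mono_of_injective _ U.toSubmodule.injective_subtype
    by_cases hzero : incl = 0
    · left
      refine eq_bot_iff.2 fun u hu => ?_
      exact congr($hzero (⟨u, hu⟩ : U.toSubmodule))
    · right
      have := isIso_of_mono_of_nonzero hzero
      refine eq_top_iff.2 fun v _ => ?_
      obtain ⟨u, rfl⟩ := (FDRep.isoToLinearEquiv (asIso incl)).surjective v
      exact u.2

theorem simple_of_isIrreducible [IsAlgClosed k] [Finite G] [CharZero k]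
    {V : Type u} [AddCommGroup V] [Module k V] [FiniteDimensional k V]
    (ρ : Representation k G V) [ρ.IsIrreducible] : Simple (FDRep.of ρ) := by
  have := Fintype.ofFinite G
  exact (FDRep.simple_iff_char_is_norm_one _).2 (sum_character_mul_character_inv ρ)

end FDRep

/-! ### Integrality -/

section Integrality

variable {k : Type*} [Field k]

theorem isIntegral_trace_of_isOfFinOrder [IsAlgClosed k] {E : Type*} [AddCommGroup E] [Module k E]
    [FiniteDimensional k E] {u : End k E} (hu : IsOfFinOrder u) :
    IsIntegral ℤ (LinearMap.trace k E u) := by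
  obtain ⟨n, hn, hun⟩ := isOfFinOrder_iff_pow_eq_one.1 hu
  rw [End.trace_eq_sum_roots_charpoly_of_splits (IsAlgClosed.splits _)]
  refine IsIntegral.multiset_sum fun μ hμ => ?_
  have heigen : u.HasEigenvalue μ :=
    (u.hasEigenvalue_iff_isRoot_charpoly μ).2 (Polynomial.mem_roots'.1 hμ).2
  obtain ⟨v, hv⟩ := heigen.exists_hasEigenvector
  have hroot : μ ^ n = 1 := by
    have hpow := hv.pow_apply n
    rw [hun, End.one_apply] at hpow
    exact smul_left_injective k hv.2 (by simpa using hpow.symm)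
  exact IsIntegral.of_pow hn (hroot ▸ isIntegral_one)

theorem isIntegral_of_smul_one_eq_sum_smul {H E ι : Type*} [Group H] [Finite H] [Fintype ι]
    [AddCommGroup E] [Module k E] [Nontrivial E] (τ : Representation k H E) {c : k}
    (t : ι → k) (ht : ∀ i, IsIntegral ℤ (t i)) (h : ι → H)
    (hc : c • (1 : End k E) = ∑ i, t i • τ (h i)) : IsIntegral ℤ c := by
  let O := integralClosure ℤ k
  let x : MonoidAlgebra O H := ∑ i, MonoidAlgebra.single (h i) ⟨t i, ht i⟩
  have hx : MonoidAlgebra.lift O (End k E) H τ x = algebraMap k (End k E) c := by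
    rw [Algebra.algebraMap_eq_smul_one, hc, map_sum]
    exact Finset.sum_congr rfl fun i _ => MonoidAlgebra.lift_single ..
  have hlift : IsIntegral O (algebraMap k (End k E) c) :=
    hx ▸ (IsIntegral.of_finite O x).map (MonoidAlgebra.lift O (End k E) H τ)
  have : IsIntegral O c := (isIntegral_algebraMap_iff (algebraMap k (End k E)).injective).1 hlift
  exact isIntegral_trans c this

theorem natCast_dvd_of_isIntegral_of_mul_eq [CharZero k] {m n : ℕ} (hn : n ≠ 0) {c : k}
    (hc : IsIntegral ℤ c) (hmul : n * c = m) : n ∣ m := by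
  have hn' : (n : k) ≠ 0 := Nat.cast_ne_zero.2 hn
  have hrat : c = algebraMap ℚ k (m / n) := by
    rw [map_div₀, map_natCast, map_natCast, eq_div_iff hn', mul_comm, hmul]
  rw [hrat, isIntegral_algebraMap_iff (algebraMap ℚ k).injective,
    IsIntegrallyClosed.isIntegral_iff] at hc
  obtain ⟨z, hz⟩ := hc
  rw [eq_intCast, eq_div_iff (Nat.cast_ne_zero.2 hn)] at hz
  refine Int.natCast_dvd_natCast.1 ⟨z, ?_⟩
  rw [mul_comm]
  exact_mod_cast hz.symm

end Integrality

/-! ### The projective action of the inertia group on the multiplicity space -/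

section Inertia

variable {k G V W : Type*} [Field k] [Group G] {N : Subgroup G} [N.Normal]
  [AddCommGroup V] [Module k V] [AddCommGroup W] [Module k W]
  (σ : Representation k G V) (ρ : Representation k N W)

/-- The pairs `(g, u)` such that `u` intertwines `ρ` with its conjugate by `g`. This group is an
extension of the inertia group of `ρ` in `G`, and acts linearly wherever the inertia group acts
only projectively. -/
def inertiaPairs : Subgroup (G × (End k W)ˣ) where
  carrier := {x | ∀ n : N, x.2 * ρ n = ρ (MulAut.conjNormal x.1 n) * x.2}
  one_mem' n := by simp
  mul_mem' {x y} hx hy n := by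
    rw [Prod.snd_mul, Units.val_mul, mul_assoc, hy, ← mul_assoc, hx, mul_assoc, Prod.fst_mul,
      map_mul, MulAut.mul_apply]
  inv_mem' {x} hx n := by
    rw [Prod.snd_inv, Units.inv_mul_eq_iff_eq_mul, ← mul_assoc, hx, ← MulAut.mul_apply, ← map_mul,
      Prod.fst_inv, mul_inv_cancel, map_one, MulAut.one_apply, Units.mul_inv_cancel_right]

namespace inertiaPairs

/-- The projection `(g, u) ↦ g`; its range is the inertia group of `ρ`. -/
def toGroup : inertiaPairs ρ →* G :=
  (MonoidHom.fst _ _).comp (inertiaPairs ρ).subtype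

/-- The tautological action `(g, u) ↦ u` on the space of `ρ`, extending `ρ` along `ofNormal`. -/
def operator : Representation k (inertiaPairs ρ) W :=
  (Units.coeHom _).comp ((MonoidHom.snd _ _).comp (inertiaPairs ρ).subtype)

variable {ρ} in
theorem ext {x y : inertiaPairs ρ} (hgroup : toGroup ρ x = toGroup ρ y)
    (hoperator : operator ρ x = operator ρ y) : x = y :=
  Subtype.ext (Prod.ext hgroup (Units.ext hoperator))

variable {ρ} in
theorem operator_mul_apply (x : inertiaPairs ρ) (n : N) :
    operator ρ x * ρ n = ρ (MulAut.conjNormal (toGroup ρ x) n) * operator ρ x :=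
  x.2 n

/-- The embedding `n ↦ (n, ρ n)` of the normal subgroup. -/
def ofNormal : N →* inertiaPairs ρ :=
  (N.subtype.prod ρ.asGroupHom).codRestrict _ fun m n => by
    simp only [MonoidHom.prod_apply, asGroupHom_apply, ← map_mul]
    congr 1
    ext
    simp

theorem toGroup_ofNormal (n : N) : toGroup ρ (ofNormal ρ n) = n := rfl

theorem operator_ofNormal (n : N) : operator ρ (ofNormal ρ n) = ρ n := rfl

theorem ofNormal_injective : Function.Injective (ofNormal ρ) :=
  fun _ _ h => Subtype.ext congr(toGroup ρ $h)

instance normal_range_ofNormal : (ofNormal ρ).range.Normal where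
  conj_mem := by
    rintro _ ⟨n, rfl⟩ x
    refine ⟨MulAut.conjNormal (toGroup ρ x) n, eq_mul_inv_of_mul_eq (ext ?_ ?_)⟩
    · simp [toGroup_ofNormal]
    · rw [map_mul, map_mul, operator_ofNormal, operator_ofNormal, operator_mul_apply]

/-- The action `(g, u) • φ = σ g ∘ φ ∘ u⁻¹` on all linear maps from the space of `ρ` to that of
`σ`. -/
abbrev homRepresentation : Representation k (inertiaPairs ρ) (W →ₗ[k] V) :=
  linHom (operator ρ) (σ.comp (toGroup ρ))

/-- The space `Hom_N(W, V)`, encoded as the maps fixed by the image of `N` in `inertiaPairs ρ`. -/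
noncomputable abbrev multiplicitySpace : Submodule k (W →ₗ[k] V) :=
  invariants ((homRepresentation σ ρ).comp (ofNormal ρ).range.subtype)

/-- The linear action of `inertiaPairs ρ` on `Hom_N(W, V)`. -/
noncomputable abbrev multiplicityRepresentation :
    Representation k (inertiaPairs ρ) (multiplicitySpace σ ρ) :=
  (homRepresentation σ ρ).toInvariants (ofNormal ρ).range

theorem mem_multiplicitySpace_iff {φ : W →ₗ[k] V} :
    φ ∈ multiplicitySpace σ ρ ↔ ∀ n : N, φ ∘ₗ ρ n = σ n ∘ₗ φ := by
  have hfix : φ ∈ multiplicitySpace σ ρ ↔ φ ∈ invariants (linHom ρ (σ.comp N.subtype)) :=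
    (ofNormal ρ).rangeRestrict_surjective.forall
  rw [hfix]
  refine (mem_linHom_invariants_iff_isIntertwining φ).trans ?_
  simp only [isIntertwiningMap_iff, LinearMap.ext_iff]
  rfl

theorem multiplicityRepresentation_apply (x : inertiaPairs ρ) (φ : multiplicitySpace σ ρ) :
    (multiplicityRepresentation σ ρ x φ : W →ₗ[k] V) =
      σ (toGroup ρ x) ∘ₗ φ ∘ₗ operator ρ x⁻¹ := rfl

/-- The kernel of `toGroup` for irreducible `ρ`, embedded as `c ↦ (1, c)`. -/
def scalar : kˣ →* inertiaPairs ρ :=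
  ((1 : kˣ →* G).prod (Units.map (algebraMap k (End k W)).toMonoidHom)).codRestrict _ fun c n => by
    simp [Algebra.commutes]

theorem operator_scalar (c : kˣ) : operator ρ (scalar ρ c) = (c : k) • 1 := rfl

theorem toGroup_scalar (c : kˣ) : toGroup ρ (scalar ρ c) = 1 := rfl

theorem multiplicityRepresentation_scalar (c : kˣ) :
    multiplicityRepresentation σ ρ (scalar ρ c) = ((c⁻¹ : kˣ) : k) • 1 := by
  refine LinearMap.ext fun φ => Subtype.ext ?_
  rw [multiplicityRepresentation_apply, ← map_inv, operator_scalar, toGroup_scalar, map_one]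
  ext w
  simp

variable {ρ} in
theorem exists_scalar_eq_of_toGroup_eq_one [IsAlgClosed k] [FiniteDimensional k W]
    [ρ.IsIrreducible] {x : inertiaPairs ρ} (hx : toGroup ρ x = 1) : ∃ c : kˣ, scalar ρ c = x := by
  have : Nontrivial W := nontrivial_of_isIrreducible ρ
  obtain ⟨c, hc⟩ := exists_eq_smul_one_of_isIrreducible ρ (f := operator ρ x) fun n => by
    rw [Commute, SemiconjBy, operator_mul_apply, hx, map_one, MulAut.one_apply]
  have hc0 : c ≠ 0 := by
    rintro rfl
    rw [zero_smul] at hc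
    exact x.1.2.ne_zero hc
  exact ⟨Units.mk0 c hc0, ext hx.symm hc.symm⟩

/-- The pairs acting with determinant one on `Hom_N(W, V)`. They replace `inertiaPairs ρ` by a
finite group which still maps onto the inertia group. -/
noncomputable def detOne : Subgroup (inertiaPairs ρ) :=
  (LinearMap.det.comp (multiplicityRepresentation σ ρ)).ker

theorem mem_detOne_iff {x : inertiaPairs ρ} :
    x ∈ detOne σ ρ ↔ LinearMap.det (multiplicityRepresentation σ ρ x) = 1 := Iff.rfl

theorem det_multiplicityRepresentation_scalar (c : kˣ) :
    LinearMap.det (multiplicityRepresentation σ ρ (scalar ρ c)) =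
      ((c⁻¹ : kˣ) : k) ^ finrank k (multiplicitySpace σ ρ) := by
  rw [multiplicityRepresentation_scalar, LinearMap.det_smul, map_one, mul_one]

variable [IsAlgClosed k] [FiniteDimensional k W] [FiniteDimensional k V]
  [Nontrivial (multiplicitySpace σ ρ)]

instance finite_detOne [Finite G] [ρ.IsIrreducible] : Finite (detOne σ ρ) := by
  let f : detOne σ ρ →* G := (toGroup ρ).comp (detOne σ ρ).subtype
  have hker : Finite f.ker := by
    have : NeZero (finrank k (multiplicitySpace σ ρ)) := ⟨finrank_pos.ne'⟩
    let roots := rootsOfUnity (finrank k (multiplicitySpace σ ρ)) k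
    have hmem (x : f.ker) : ∃ c : roots, scalar ρ c = x.1.1 := by
      obtain ⟨c, hc⟩ := exists_scalar_eq_of_toGroup_eq_one (x := x.1.1) x.2
      refine ⟨⟨c, ?_⟩, hc⟩
      have hdet := (mem_detOne_iff σ ρ).1 x.1.2
      rw [← hc, det_multiplicityRepresentation_scalar] at hdet
      rw [mem_rootsOfUnity, ← inv_eq_one, ← inv_pow]
      exact Units.ext (by simpa using hdet)
    choose c hc using hmem
    refine Finite.of_injective c fun x y hxy => Subtype.ext (Subtype.ext ?_)
    rw [← hc, ← hc, hxy]
  have := Fintype.ofFinite f.ker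
  have := Fintype.ofFinite G
  exact (Group.fintypeOfKerOfCodom f).finite

theorem exists_mem_detOne_toGroup_eq (x : inertiaPairs ρ) :
    ∃ y ∈ detOne σ ρ, toGroup ρ y = toGroup ρ x := by
  have hunit : LinearMap.det (multiplicityRepresentation σ ρ x) ≠ 0 :=
    ((Group.isUnit x).map (LinearMap.det.comp (multiplicityRepresentation σ ρ))).ne_zero
  obtain ⟨c, hc⟩ := IsAlgClosed.exists_pow_nat_eq
    (LinearMap.det (multiplicityRepresentation σ ρ x))
    (finrank_pos (R := k) (M := multiplicitySpace σ ρ))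
  have hc0 : c ≠ 0 := by
    rintro rfl
    exact hunit (by rw [← hc, zero_pow finrank_pos.ne'])
  refine ⟨scalar ρ (Units.mk0 c hc0) * x, ?_, ?_⟩
  · rw [mem_detOne_iff, map_mul, map_mul, det_multiplicityRepresentation_scalar, ← hc]
    simp [hc0]
  · rw [map_mul, toGroup_scalar, one_mul]

end inertiaPairs
end Inertia

/-! ### The degree of an irreducible representation divides `|G : N| ψ(1)` -/

section CosetCharacterSum

variable {k G V W : Type*} [Field k] [Group G] {N : Subgroup G}
  [AddCommGroup V] [Module k V] [AddCommGroup W] [Module k W]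
  (σ : Representation k G V) (ρ : Representation k N W)

/-- The operator `∑ χ((gn)⁻¹) ρ(n)`, where `χ` is the character of `σ`: the part of the central
operator `∑ χ(x⁻¹) σ(x)` coming from the coset `gN`, with `σ g` split off and transported from the
space of `σ` to that of `ρ`. -/
noncomputable def cosetCharacterSum [Fintype N] (g : G) : End k W :=
  ∑ n : N, σ.character (g * n)⁻¹ • ρ n

theorem sum_char_inv_smul_comp [Fintype G] [Fintype N] {S : Set G} [Fintype S]
    (hS : Subgroup.IsComplement S N) {φ : W →ₗ[k] V} (hφ : ∀ n : N, φ ∘ₗ ρ n = σ n ∘ₗ φ) :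
    (∑ x, σ.character x⁻¹ • σ x) ∘ₗ φ = ∑ s : S, σ s ∘ₗ φ ∘ₗ cosetCharacterSum σ ρ s := by
  rw [← Function.Bijective.sum_comp hS, Fintype.sum_prod_type]
  ext w
  simp only [cosetCharacterSum, LinearMap.comp_apply, LinearMap.sum_apply, LinearMap.smul_apply,
    map_sum, map_smul, map_mul, Module.End.mul_apply]
  refine Finset.sum_congr rfl fun s _ => Finset.sum_congr rfl fun n _ => ?_
  rw [← LinearMap.comp_apply (σ n) φ, ← hφ, LinearMap.comp_apply]

theorem finrank_smul_sum_comp_cosetCharacterSum [CharZero k] [IsAlgClosed k]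
    [FiniteDimensional k V] [Finite G] [Fintype N] [σ.IsIrreducible] {S : Set G} [Fintype S]
    (hS : Subgroup.IsComplement S N) {φ : W →ₗ[k] V} (hφ : ∀ n : N, φ ∘ₗ ρ n = σ n ∘ₗ φ) :
    (finrank k V : k) • ∑ s : S, σ s ∘ₗ φ ∘ₗ cosetCharacterSum σ ρ s = (Nat.card G : k) • φ := by
  have := Fintype.ofFinite G
  rw [← sum_char_inv_smul_comp σ ρ hS hφ, ← LinearMap.smul_comp,
    finrank_smul_eq_trace_smul_one σ (commute_sum_char_inv_smul σ), trace_sum_char_inv_smul,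
    LinearMap.smul_comp, Module.End.one_eq_id, LinearMap.id_comp]

variable [N.Normal]

theorem cosetCharacterSum_mul [Fintype N] (g : G) (m : N) :
    cosetCharacterSum σ ρ g * ρ m =
      ρ (MulAut.conjNormal g⁻¹ m) * cosetCharacterSum σ ρ g := by
  rw [cosetCharacterSum, Finset.sum_mul, Finset.mul_sum]
  let e := (Equiv.mulLeft (MulAut.conjNormal g⁻¹ m)⁻¹).trans (Equiv.mulRight m)
  refine Fintype.sum_equiv e _ _ fun n => ?_
  have hchar : σ.character (g * e n)⁻¹ = σ.character (g * n)⁻¹ := by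
    rw [← σ.char_conj (g * n)⁻¹ (m : G)⁻¹]
    congr 1
    simp [e, mul_assoc]
  rw [hchar, smul_mul_assoc, mul_smul_comm, ← map_mul, ← map_mul]
  congr 2
  simp [e, mul_assoc]

variable {ρ}

theorem exists_toGroup_eq_of_cosetCharacterSum_ne_zero [Fintype N] [ρ.IsIrreducible] {g : G}
    (hg : cosetCharacterSum σ ρ g ≠ 0) : ∃ x : inertiaPairs ρ, inertiaPairs.toGroup ρ x = g := by
  let conj : N →* N := (MulAut.conjNormal g⁻¹ : MulAut N)
  have : IsIrreducible (ρ.comp conj) :=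
    isIrreducible_comp_of_surjective ρ (MulAut.conjNormal g⁻¹ : MulAut N).surjective
  let f : IntertwiningMap ρ (ρ.comp conj) :=
    ⟨cosetCharacterSum σ ρ g, cosetCharacterSum_mul σ ρ g⟩
  have hbij : Function.Bijective f := (IsIrreducible.bijective_or_eq_zero f).resolve_right
    fun h => hg (congrArg IntertwiningMap.toLinearMap h)
  obtain ⟨u, hu⟩ := (Module.End.isUnit_iff (cosetCharacterSum σ ρ g)).2 hbij
  let y : inertiaPairs ρ := ⟨(g⁻¹, u), fun n => hu ▸ cosetCharacterSum_mul σ ρ g n⟩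
  refine ⟨y⁻¹, ?_⟩
  rw [map_inv]
  exact inv_inv g

namespace inertiaPairs

section Trace

variable [Fintype N]

theorem commute_operator_mul_cosetCharacterSum (x : inertiaPairs ρ) (n : N) :
    Commute (operator ρ x * cosetCharacterSum σ ρ (toGroup ρ x)) (ρ n) := by
  rw [Commute, SemiconjBy, mul_assoc, cosetCharacterSum_mul, ← mul_assoc, operator_mul_apply,
    ← MulAut.mul_apply, ← map_mul, mul_inv_cancel, map_one, MulAut.one_apply, mul_assoc]

variable [CharZero k] [FiniteDimensional k W] [FiniteDimensional k V]

theorem card_mul_character_multiplicityRepresentation_inv (x : inertiaPairs ρ) :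
    Nat.card N * (multiplicityRepresentation σ ρ).character x⁻¹ =
      LinearMap.trace k W (operator ρ x * cosetCharacterSum σ ρ (toGroup ρ x)) := by
  let e := MonoidHom.ofInjective (ofNormal_injective ρ)
  have := Fintype.ofEquiv N e.toEquiv
  rw [Nat.card_congr e.toEquiv, card_mul_character_toInvariants, cosetCharacterSum, Finset.mul_sum,
    map_sum]
  refine (Fintype.sum_equiv ((Equiv.inv N).trans e.toEquiv) _ _ fun n => ?_).symm
  have hcoe : (e n⁻¹ : inertiaPairs ρ) = (ofNormal ρ n)⁻¹ := map_inv (ofNormal ρ) n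
  rw [Equiv.trans_apply, Equiv.inv_apply, MulEquiv.toEquiv_eq_coe, MulEquiv.coe_toEquiv, hcoe,
    ← mul_inv_rev, char_linHom, inv_inv, mul_smul_comm, map_smul, smul_eq_mul, mul_comm]
  congr 1
  · rw [LinearMap.trace_mul_comm, ← operator_ofNormal, ← map_mul]
    rfl
  · have h : σ.character (toGroup ρ x * n)⁻¹ = σ.character (n * toGroup ρ x)⁻¹ := by
      rw [mul_inv_rev, mul_inv_rev, σ.char_mul_comm]
    rw [h, mul_inv_rev, mul_inv_rev]
    rfl

end Trace

variable [CharZero k] [IsAlgClosed k] [FiniteDimensional k V]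

theorem finrank_smul_cosetCharacterSum [FiniteDimensional k W] [Fintype N] [ρ.IsIrreducible]
    (x : inertiaPairs ρ) :
    (finrank k W : k) • cosetCharacterSum σ ρ (toGroup ρ x) =
      (Nat.card N * (multiplicityRepresentation σ ρ).character x⁻¹) • operator ρ x⁻¹ := by
  have h := finrank_smul_eq_trace_smul_one ρ (commute_operator_mul_cosetCharacterSum σ x)
  rw [← card_mul_character_multiplicityRepresentation_inv] at h
  have hinv : operator ρ x⁻¹ * operator ρ x = 1 := by rw [← map_mul, inv_mul_cancel, map_one]
  calc
    _ = operator ρ x⁻¹ * ((finrank k W : k) •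
        (operator ρ x * cosetCharacterSum σ ρ (toGroup ρ x))) := by
      rw [mul_smul_comm, ← mul_assoc, hinv, one_mul]
    _ = _ := by rw [h, mul_smul_comm, mul_one]

theorem exists_finrank_smul_comp_cosetCharacterSum [FiniteDimensional k W] [Finite G] [Fintype N]
    [ρ.IsIrreducible] [Nontrivial (multiplicitySpace σ ρ)] (g : G) :
    ∃ (y : detOne σ ρ) (t : k), IsIntegral ℤ t ∧ ∀ φ : multiplicitySpace σ ρ,
      (finrank k W : k) • (σ g ∘ₗ φ ∘ₗ cosetCharacterSum σ ρ g) =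
        (Nat.card N * t) • (multiplicityRepresentation σ ρ y φ : W →ₗ[k] V) := by
  by_cases hg : cosetCharacterSum σ ρ g = 0
  · exact ⟨1, 0, isIntegral_zero, fun φ => by simp [hg]⟩
  obtain ⟨x, hx⟩ := exists_toGroup_eq_of_cosetCharacterSum_ne_zero σ hg
  obtain ⟨y, hy, hyx⟩ := exists_mem_detOne_toGroup_eq σ ρ x
  obtain rfl : toGroup ρ y = g := hyx.trans hx
  refine ⟨⟨y, hy⟩, (multiplicityRepresentation σ ρ).character y⁻¹, ?_, fun φ => ?_⟩
  · have hfin : IsOfFinOrder y⁻¹ :=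
      ((detOne σ ρ).subtype.isOfFinOrder (isOfFinOrder_of_finite ⟨y, hy⟩)).inv
    exact isIntegral_trace_of_isOfFinOrder ((multiplicityRepresentation σ ρ).isOfFinOrder hfin)
  · rw [multiplicityRepresentation_apply, ← LinearMap.comp_smul, ← LinearMap.comp_smul,
      ← LinearMap.comp_smul, ← LinearMap.comp_smul, finrank_smul_cosetCharacterSum]

theorem smul_one_eq_sum_smul_multiplicityRepresentation [Finite G] [Fintype N] [σ.IsIrreducible]
    {S : Set G} [Fintype S] (hS : Subgroup.IsComplement S N) {y : S → inertiaPairs ρ} {t : S → k}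
    (hyt : ∀ (s : S) (φ : multiplicitySpace σ ρ),
      (finrank k W : k) • (σ s ∘ₗ φ ∘ₗ cosetCharacterSum σ ρ s) =
        (Nat.card N * t s) • (multiplicityRepresentation σ ρ (y s) φ : W →ₗ[k] V)) :
    (N.index * finrank k W / finrank k V : k) • (1 : End k (multiplicitySpace σ ρ)) =
      ∑ s, t s • multiplicityRepresentation σ ρ (y s) := by
  have : Nontrivial V := nontrivial_of_isIrreducible σ
  have hV : (finrank k V : k) ≠ 0 := Nat.cast_ne_zero.2 finrank_pos.ne'
  have hN : (Nat.card N : k) ≠ 0 := NeZero.ne _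
  let τ := multiplicityRepresentation σ ρ
  refine LinearMap.ext fun φ => Subtype.ext (smul_right_injective _ (mul_ne_zero hV hN) ?_)
  have hφ := finrank_smul_sum_comp_cosetCharacterSum σ ρ hS ((mem_multiplicitySpace_iff σ ρ).1 φ.2)
  calc (finrank k V * Nat.card N : k) • (N.index * finrank k W / finrank k V : k) • φ.1
    _ = (finrank k W : k) • (Nat.card G : k) • φ.1 := by
      rw [smul_smul, smul_smul, ← N.card_mul_index]
      congr 1
      push_cast
      field_simp
    _ = (finrank k V : k) • ∑ s : S, (Nat.card N * t s) • (τ (y s) φ).1 := by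
      rw [← hφ, smul_comm, Finset.smul_sum]
      simp only [hyt, τ]
    _ = (finrank k V * Nat.card N : k) • ∑ s : S, t s • (τ (y s) φ).1 := by
      simp only [mul_smul, Finset.smul_sum]
    _ = (finrank k V * Nat.card N : k) • ((∑ s, t s • τ (y s)) φ).1 := by simp

end inertiaPairs

open inertiaPairs in
theorem finrank_dvd_index_mul_finrank [CharZero k] [IsAlgClosed k] [FiniteDimensional k W]
    [FiniteDimensional k V] [Finite G] [σ.IsIrreducible] [ρ.IsIrreducible]
    {f : W →ₗ[k] V} (hf : ∀ n : N, f ∘ₗ ρ n = σ n ∘ₗ f) (hf0 : f ≠ 0) :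
    finrank k V ∣ N.index * finrank k W := by
  have := Fintype.ofFinite G
  have : Nontrivial (multiplicitySpace σ ρ) :=
    nontrivial_of_ne ⟨f, (mem_multiplicitySpace_iff σ ρ).2 hf⟩ 0
      fun h => hf0 (congrArg Subtype.val h)
  have : Nontrivial V := nontrivial_of_isIrreducible σ
  have hV : finrank k V ≠ 0 := finrank_pos.ne'
  obtain ⟨S, hS, -⟩ := N.exists_isComplement_left 1
  choose y t ht hyt using fun s : S => exists_finrank_smul_comp_cosetCharacterSum σ (ρ := ρ) s.1
  have hscalar := smul_one_eq_sum_smul_multiplicityRepresentation σ hS hyt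
  have hintegral : IsIntegral ℤ (N.index * finrank k W / finrank k V : k) :=
    isIntegral_of_smul_one_eq_sum_smul
      ((multiplicityRepresentation σ ρ).comp (detOne σ ρ).subtype) t ht y hscalar
  refine natCast_dvd_of_isIntegral_of_mul_eq hV hintegral ?_
  rw [mul_div_cancel₀ _ (Nat.cast_ne_zero.2 hV), Nat.cast_mul]

end CosetCharacterSum

/-! ### The constituents of the restriction to a normal subgroup -/

theorem factorization_eq_of_eq_mul_of_dvd {p a b m n : ℕ} (hm : m ≠ 0) (hp : ¬ p ∣ n)
    (hab : m = a * b) (hdvd : m ∣ n * b) : m.factorization p = b.factorization p := by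
  subst hab
  obtain ⟨ha, hb⟩ := mul_ne_zero_iff.1 hm
  have han : a ∣ n := Nat.dvd_of_mul_dvd_mul_right (Nat.pos_of_ne_zero hb) hdvd
  rw [Nat.factorization_mul ha hb, Finsupp.add_apply,
    Nat.factorization_eq_zero_of_not_dvd fun h => hp (h.trans han), zero_add]

section Clifford

variable {k G V : Type*} [Field k] [Group G] [Finite G] [AddCommGroup V] [Module k V]
  {N : Subgroup G} [N.Normal] {σ : Representation k G V} [σ.IsIrreducible]

theorem finrank_eq_of_isIrreducible_comp_subtype [NeZero (Nat.card N : k)]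
    (U U' : Subrepresentation (σ.comp N.subtype))
    [U.toRepresentation.IsIrreducible] [U'.toRepresentation.IsIrreducible] :
    finrank k U.toSubmodule = finrank k U'.toSubmodule := by
  obtain ⟨π, hπ⟩ := exists_intertwiningMap_apply_coe_eq U'
  have := nontrivial_of_isIrreducible U.toRepresentation
  have := nontrivial_of_isIrreducible U'.toRepresentation
  obtain ⟨u, hu⟩ := exists_ne (0 : U.toSubmodule)
  obtain ⟨u', hu'⟩ := exists_ne (0 : U'.toSubmodule)
  have hπ0 : π.toLinearMap ≠ 0 := fun h => hu' ((hπ u').symm.trans (LinearMap.congr_fun h u'))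
  obtain ⟨g, hg⟩ := exists_apply_ne_zero_of_isIrreducible σ hπ0 (Subtype.coe_ne_coe.2 hu)
  let conj : N →* N := (MulAut.conjNormal g : MulAut N)
  have : IsIrreducible (U'.toRepresentation.comp conj) :=
    isIrreducible_comp_of_surjective _ (MulAut.conjNormal g : MulAut N).surjective
  let f : IntertwiningMap U.toRepresentation (U'.toRepresentation.comp conj) :=
    { toLinearMap := π.toLinearMap ∘ₗ σ g ∘ₗ U.toSubmodule.subtype
      isIntertwining' n := by
        have hconj : σ g ∘ₗ σ n = σ (conj n) ∘ₗ σ g := by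
          rw [← Module.End.mul_eq_comp, ← Module.End.mul_eq_comp, ← map_mul, ← map_mul]
          simp [conj]
        ext w : 1
        exact (congrArg π (LinearMap.congr_fun hconj w)).trans
          (LinearMap.congr_fun (π.isIntertwining' (conj n)) _) }
  have hbij : Function.Bijective f := (IsIrreducible.bijective_or_eq_zero f).resolve_right
    fun h => hg (congr($h u))
  exact (LinearEquiv.ofBijective f.toLinearMap hbij).finrank_eq

variable [FiniteDimensional k V] {ι : Type*} [DecidableEq ι]
  {U : ι → Subrepresentation (σ.comp N.subtype)}

theorem finrank_eq_card_mul_finrank_of_isInternal [NeZero (Nat.card N : k)] [Fintype ι]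
    (hirr : ∀ i, (U i).toRepresentation.IsIrreducible)
    (hU : DirectSum.IsInternal fun i => (U i).toSubmodule) (i : ι) :
    finrank k V = Fintype.card ι * finrank k (U i).toSubmodule := by
  rw [LinearEquiv.finrank_eq (LinearEquiv.ofBijective (DirectSum.coeLinearMap _) hU).symm,
    finrank_directSum]
  have hdim (j : ι) (_ : j ∈ Finset.univ) :
      finrank k (U j).toSubmodule = finrank k (U i).toSubmodule :=
    have := hirr i
    have := hirr j
    finrank_eq_of_isIrreducible_comp_subtype (U j) (U i)
  rw [Finset.sum_congr rfl hdim, Finset.sum_const, Finset.card_univ, smul_eq_mul]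

theorem factorization_finrank_eq_of_not_dvd_index [CharZero k] [IsAlgClosed k] [Finite ι] {p : ℕ}
    (hp : ¬ p ∣ N.index) (hirr : ∀ i, (U i).toRepresentation.IsIrreducible)
    (hU : DirectSum.IsInternal fun i => (U i).toSubmodule) (i : ι) :
    (finrank k V).factorization p = (finrank k (U i).toSubmodule).factorization p := by
  have := Fintype.ofFinite ι
  have := hirr i
  have := nontrivial_of_isIrreducible σ
  have := nontrivial_of_isIrreducible (U i).toRepresentation
  have hincl : (U i).toSubmodule.subtype ≠ 0 := by
    obtain ⟨u, hu⟩ := exists_ne (0 : (U i).toSubmodule)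
    exact fun h => hu (Subtype.ext (LinearMap.congr_fun h u))
  exact factorization_eq_of_eq_mul_of_dvd finrank_pos.ne' hp
    (finrank_eq_card_mul_finrank_of_isInternal hirr hU i)
    (finrank_dvd_index_mul_finrank σ (ρ := (U i).toRepresentation) (fun _ => rfl) hincl)

end Clifford

/-! ### Sums of induced characters -/

section Transport

variable {A B : Type} [Group A] [Group B]

theorem inducedChar_map_mulEquiv [Fintype A] [Fintype B] (e : A ≃* B) (Q : Subgroup A)
    (lam : Q → ℂ) (a : A) :
    inducedChar (Q.map (e : A →* B)) (lam ∘ (e.subgroupMap Q).symm) (e a) =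
      inducedChar Q lam a := by
  have hmem (x : A) : e x * e a * (e x)⁻¹ ∈ Q.map (e : A →* B) ↔ x * a * x⁻¹ ∈ Q := by
    rw [← map_inv, ← map_mul, ← map_mul]
    exact Subgroup.mem_map_iff_mem e.injective
  unfold inducedChar
  congr 1
  · rw [Fintype.card_congr (e.subgroupMap Q).toEquiv]
  · refine (Fintype.sum_equiv e.toEquiv _ _ fun x => ?_).symm
    refine dite_congr (propext (hmem x).symm) (fun h => congrArg lam ?_) fun _ => rfl
    rw [MulEquiv.eq_symm_apply]
    ext
    simp

theorem IsIrreducibleCharacter.comp_mulEquiv [Finite B] {χ : A → ℂ} (hχ : IsIrreducibleCharacter χ)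
    (e : B ≃* A) : IsIrreducibleCharacter (χ ∘ e) := by
  obtain ⟨V, hV, rfl⟩ := hχ
  have := isIrreducible_of_simple V
  have : IsIrreducible (V := V) (MonoidHom.comp V.ρ e.toMonoidHom) :=
    isIrreducible_comp_of_surjective _ e.surjective
  exact ⟨FDRep.of (V := V) (MonoidHom.comp V.ρ e.toMonoidHom), simple_of_isIrreducible _, rfl⟩

end Transport

section SumInducedProperty

variable {p : ℕ} {G : Type} [Group G] [Fintype G] {P : Subgroup G} {d : ℕ}

theorem SumInducedProperty.congr_factorization {d' : ℕ}
    {χ : G → ℂ} (h : SumInducedProperty p P χ d) (hd : d'.factorization p = d.factorization p) :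
    SumInducedProperty p P χ d' := by
  rwa [SumInducedProperty, hd]

theorem SumInducedProperty.sum {ι : Type*} [Fintype ι] {χ : ι → G → ℂ}
    (h : ∀ i, SumInducedProperty p P (χ i) d) : SumInducedProperty p P (∑ i, χ i) d := by
  choose n Q lam hirr hindex hsum using h
  let e := (Fintype.equivFin (Σ i, Fin (n i))).symm
  refine ⟨_, fun j => Q (e j).1 (e j).2, fun j => lam (e j).1 (e j).2, fun j => hirr _ _,
    fun j => hindex _ _, fun x => ?_⟩
  rw [e.sum_comp fun s : Σ i, Fin (n i) => inducedChar (Q s.1 s.2) (lam s.1 s.2) x,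
    Fintype.sum_sigma, Finset.sum_apply]
  exact Finset.sum_congr rfl fun i _ => hsum i x

theorem SumInducedProperty.of_subgroupOf {N : Subgroup G} (hPN : P ≤ N) {χ : G → ℂ}
    (h : SumInducedProperty p (P.subgroupOf N) (fun n : N => χ n) d) :
    SumInducedProperty p P χ d := by
  obtain ⟨n, Q, lam, hirr, hindex, hsum⟩ := h
  let e : P.subgroupOf N ≃* P := Subgroup.subgroupOfEquivOfLe hPN
  refine ⟨n, fun i => (Q i).map (e : _ →* _), fun i => lam i ∘ (e.subgroupMap (Q i)).symm,
    fun i => (hirr i).comp_mulEquiv _, fun i => ?_, fun x => ?_⟩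
  · rw [hindex]
    exact (Subgroup.index_map_equiv _ e).symm
  · obtain ⟨y, rfl⟩ := e.surjective x
    simp only [inducedChar_map_mulEquiv]
    exact hsum y

end SumInducedProperty

theorem reduction_to_normal_subgroup_of_coprime_index_general {p : ℕ} [Fact p.Prime] {G : Type}
    [Group G] [Fintype G] {N : Subgroup G} [N.Normal] (hidx : ¬ p ∣ N.index) {P : Subgroup G}
    (hPN : P ≤ N)
    (hyp : ∀ W : FDRep ℂ N, CategoryTheory.Simple W →
      SumInducedProperty p (P.subgroupOf N) W.character (finrank ℂ W))
    (V : FDRep ℂ G) [CategoryTheory.Simple V] :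
    SumInducedProperty p P V.character (finrank ℂ V) := by
  let σ : Representation ℂ G V := V.ρ
  have : σ.IsIrreducible := isIrreducible_of_simple V
  obtain ⟨n, U, hirr, hU⟩ := exists_isInternal_isIrreducible (σ.comp N.subtype)
  have hconstituent (i : Fin n) :
      SumInducedProperty p (P.subgroupOf N) (U i).toRepresentation.character (finrank ℂ V) :=
    have := hirr i
    (hyp (FDRep.of (U i).toRepresentation) (simple_of_isIrreducible _)).congr_factorization
      (factorization_finrank_eq_of_not_dvd_index hidx hirr hU i)
  have hrestrict : (fun x : N => V.character x) = ∑ i, (U i).toRepresentation.character := by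
    ext x
    rw [Finset.sum_apply]
    exact character_eq_sum_of_isInternal hU x
  exact .of_subgroupOf hPN (hrestrict ▸ .sum hconstituent)

theorem reduction_to_normal_subgroup_of_coprime_index
    (p : ℕ) [Fact p.Prime] (G : Type) [Group G] [Fintype G]
    (N : Subgroup G) (hN : N.Normal) (hidx : ¬ p ∣ N.index)
    (P : Sylow p G) (hPN : (P : Subgroup G) ≤ N)
    -- the property holds for every irreducible character of `N`
    -- (with respect to its Sylow `p`-subgroup `P`):
    (hyp : ∀ (W : FDRep ℂ ↥N), CategoryTheory.Simple W →
      SumInducedProperty p ((P : Subgroup G).subgroupOf N) W.character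
        (Module.finrank ℂ W)) :
    -- then it holds for every irreducible character of `G`:
    ∀ (V : FDRep ℂ G), CategoryTheory.Simple V →
      SumInducedProperty p (P : Subgroup G) V.character (Module.finrank ℂ V) := by
  exact fun V _ => reduction_to_normal_subgroup_of_coprime_index_general hidx hPN hyp V
end

section
/- Let p be a prime, G a finite group, P a Sylow p-subgroup of G, and χ an irreducible complex character of G with kernel N = ker(χ). Let π : G → G/N be the quotient map, let χ̄ be the irreducible character of G/N with χ = χ̄ ∘ π, and note that P̄ := PN/N is a Sylow p-subgroup of G/N. Assume that the restriction of χ̄ to P̄ is an integral linear combination of characters of the form μ^{P̄} induced from irreducible characters μ of subgroups Q̄ ≤ P̄ with χ(1)_p = |G/N : Q̄|_p. Then χ_P is an integral linear combination of characters of the form λ^P induced from irreducible characters λ of subgroups Q ≤ P with χ(1)_p = |G : Q|_p. -/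
open scoped Classical

/-- The restriction of `χ` (a character of degree `d` of the ambient group `G`) to the
subgroup `P` is an integral (ℤ-) linear combination of characters `λ^P` induced from
irreducible characters `λ` of subgroups `Q ≤ P` satisfying `d_p = |G : Q|_p` (the
`p`-part of the degree equals the `p`-part of the index of `Q` in the ambient group). -/
def ZSumInducedPropertyAmb (p : ℕ) {G : Type} [Group G] [Fintype G] (P : Subgroup G)
    (χ : G → ℂ) (d : ℕ) : Prop :=
  ∃ (n : ℕ) (c : Fin n → ℤ) (Q : Fin n → Subgroup ↥P)
    (lam : (i : Fin n) → ↥(Q i) → ℂ),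
    (∀ i, IsIrreducibleCharacter (lam i)) ∧
    (∀ i, p ^ (d.factorization p) = p ^ ((((Q i).map P.subtype).index).factorization p)) ∧
    (∀ x : ↥P, χ ↑x = ∑ i, (c i : ℂ) * inducedChar (Q i) (lam i) x)

/-!
Everything inflates along the surjection `P → P̄`. Inflating an irreducible representation keeps it
irreducible, because a subrepresentation of an inflated representation is itself inflated. Inflation
commutes with induction from full preimages, because every fibre of a surjective homomorphism has
the size of the kernel. Passing from `Q̄ ≤ P̄` to its preimage `Q ≤ P` keeps the index, and
neither `|G : P|` nor `|G/N : P̄|` contributes to the `p`-part, so `|G : Q|_p = |G/N : Q̄|_p`.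
-/

section Inflation

open CategoryTheory

variable {C : Type*} [Category* C] {K H : Type*} [Monoid K] [Monoid H] {f : K →* H}

lemma exists_res_obj_eq_of_mono_hom (hf : Function.Surjective f) {X : Action C H}
    {Y : Action C K} (i : Y ⟶ (Action.res C f).obj X) [Mono i.hom] :
    ∃ Z : Action C H, (Action.res C f).obj Z = Y := by
  have ρ_eq_of_map_eq : ∀ a b : K, f a = f b → Y.ρ a = Y.ρ b := fun a b hab => by
    rw [← cancel_mono i.hom, i.comm, i.comm]
    exact congrArg (fun h => i.hom ≫ X.ρ h) hab
  let σ : H →* End Y.V := (Con.lift (Con.ker f) Y.ρ ρ_eq_of_map_eq).comp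
    (Con.quotientKerEquivOfSurjective f hf).symm.toMonoidHom
  have σ_comp : σ.comp f = Y.ρ := MonoidHom.ext fun a => by
    have : (Con.quotientKerEquivOfSurjective f hf).symm (f a) = (a : (Con.ker f).Quotient) :=
      (MulEquiv.symm_apply_eq _).2 rfl
    exact congrArg (Con.lift (Con.ker f) Y.ρ ρ_eq_of_map_eq) this
  exact ⟨⟨Y.V, σ⟩, congrArg (Action.mk Y.V) σ_comp⟩

lemma simple_res_obj_of_surjective [Limits.HasZeroMorphisms C] [Limits.HasPullbacks C]
    (hf : Function.Surjective f) (X : Action C H) [Simple X] :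
    Simple ((Action.res C f).obj X) where
  mono_isIso_iff_nonzero {Y} i _ := by
    have : (Action.res C f).Full := Action.full_res C f hf
    have : Mono i.hom := inferInstanceAs (Mono ((Action.forget C K).map i))
    obtain ⟨Z, rfl⟩ := exists_res_obj_eq_of_mono_hom hf i
    obtain ⟨j, rfl⟩ := (Action.res C f).map_surjective i
    have : Mono j := (Action.res C f).mono_of_mono_map inferInstance
    rw [isIso_iff_of_reflects_iso, Simple.mono_isIso_iff_nonzero, ne_eq, ne_eq,
      ← (Action.res C f).map_eq_zero_iff]

end Inflation

lemma IsIrreducibleCharacter.comp_of_surjective {K H : Type} [Group K] [Group H] {χ : H → ℂ}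
    (hχ : IsIrreducibleCharacter χ) {f : K →* H} (hf : Function.Surjective f) :
    IsIrreducibleCharacter (χ ∘ f) := by
  obtain ⟨V, _, rfl⟩ := hχ
  exact ⟨(Action.res _ f).obj V, simple_res_obj_of_surjective hf V, rfl⟩

section SurjectiveHom

variable {K H : Type*} [Group K] [Group H] {f : K →* H}

lemma sum_comp_eq_card_ker_nsmul_sum [Fintype K] [Fintype H] (hf : Function.Surjective f)
    {M : Type*} [AddCommMonoid M] (F : H → M) :
    ∑ k, F (f k) = Nat.card f.ker • ∑ h, F h := by
  have card_fiber (h : H) : (Finset.univ.filter (f · = h)).card = Nat.card f.ker := by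
    rw [MonoidHom.card_fiber_eq_of_mem_range f (hf h) (hf 1), ← Fintype.card_subtype,
      ← Nat.card_eq_fintype_card]
    rfl
  rw [Finset.sum_comp, Finset.image_univ_of_surjective hf, Finset.smul_sum]
  exact Finset.sum_congr rfl fun h _ => by rw [card_fiber h]

lemma card_comap_eq_card_ker_mul_card (hf : Function.Surjective f) (Q : Subgroup H) :
    Nat.card (Q.comap f) = Nat.card f.ker * Nat.card Q := by
  rw [← Subgroup.relIndex_bot_left (Q.comap f),
    ← Subgroup.relIndex_mul_relIndex _ _ _ bot_le (f.ker_le_comap Q), Subgroup.relIndex_bot_left,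
    Subgroup.relIndex_ker, Subgroup.map_comap_eq_self_of_surjective hf]

lemma inducedChar_comap [Fintype K] [Fintype H] (hf : Function.Surjective f) (Q : Subgroup H)
    (μ : Q → ℂ) (k : K) :
    inducedChar (Q.comap f) (μ ∘ f.subgroupComap Q) k = inducedChar Q μ (f k) := by
  let F (y : H) : ℂ := if h : y * f k * y⁻¹ ∈ Q then μ ⟨y * f k * y⁻¹, h⟩ else 0
  have sum_eq : (∑ x : K, if h : x * k * x⁻¹ ∈ Q.comap f then
      (μ ∘ f.subgroupComap Q) ⟨x * k * x⁻¹, h⟩ else 0) = Nat.card f.ker * ∑ y, F y := by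
    rw [← nsmul_eq_mul, ← sum_comp_eq_card_ker_nsmul_sum hf]
    refine Finset.sum_congr rfl fun x _ => ?_
    have map_conj : f (x * k * x⁻¹) = f x * f k * (f x)⁻¹ := by simp
    exact dite_congr (congrArg (· ∈ Q) map_conj) (fun _ => congrArg μ (Subtype.ext map_conj))
      fun _ => rfl
  have card_ker_ne_zero : (Nat.card f.ker : ℂ) ≠ 0 := Nat.cast_ne_zero.2 Nat.card_pos.ne'
  calc inducedChar (Q.comap f) (μ ∘ f.subgroupComap Q) k
      = (Nat.card (Q.comap f) : ℂ)⁻¹ * (Nat.card f.ker * ∑ y, F y) := by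
        rw [← sum_eq, Nat.card_eq_fintype_card, inducedChar]
    _ = (Nat.card Q : ℂ)⁻¹ * ∑ y, F y := by
        rw [card_comap_eq_card_ker_mul_card hf, Nat.cast_mul]
        field_simp
    _ = inducedChar Q μ (f k) := by rw [Nat.card_eq_fintype_card, inducedChar]

end SurjectiveHom

lemma factorization_index_map_subtype {G : Type*} [Group G] {P : Subgroup G} {p : ℕ}
    (hP : ¬ p ∣ P.index) (Q : Subgroup P) [Q.FiniteIndex] :
    (Q.map P.subtype).index.factorization p = Q.index.factorization p := by
  have index_ne_zero : P.index ≠ 0 := fun h => hP (h ▸ dvd_zero p)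
  rw [Subgroup.index_map_subtype, Nat.factorization_mul Q.index_ne_zero_of_finite index_ne_zero,
    Finsupp.add_apply, Nat.factorization_eq_zero_of_not_dvd hP, add_zero]

theorem reduction_to_faithful_quotient_general {p : ℕ} [Fact p.Prime] {G H : Type} [Group G]
    [Fintype G] [Group H] [Fintype H] {f : G →* H} (hf : Function.Surjective f) {P : Subgroup G}
    (hP : p.Coprime P.index) {χ : H → ℂ} {d : ℕ}
    (hχ : ZSumInducedPropertyAmb p (P.map f) χ d) :
    ZSumInducedPropertyAmb p P (χ ∘ f) d := by
  obtain ⟨n, c, Q, μ, hμ, hQ, hsum⟩ := hχ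
  let φ : P →* P.map f := f.subgroupMap P
  have hφ : Function.Surjective φ := f.subgroupMap_surjective P
  have not_dvd_index : ¬ p ∣ P.index := (Nat.Prime.coprime_iff_not_dvd Fact.out).1 hP
  have not_dvd_index_map : ¬ p ∣ (P.map f).index := fun h =>
    not_dvd_index (h.trans (P.index_map_dvd hf))
  refine ⟨n, c, fun i => (Q i).comap φ, fun i => μ i ∘ φ.subgroupComap (Q i), fun i => ?_,
    fun i => ?_, fun x => ?_⟩
  · exact (hμ i).comp_of_surjective (φ.subgroupComap_surjective_of_surjective (Q i) hφ)
  · rw [hQ i, factorization_index_map_subtype not_dvd_index_map,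
      factorization_index_map_subtype not_dvd_index, Subgroup.index_comap_of_surjective _ hφ]
  · simp only [inducedChar_comap hφ]
    exact hsum (φ x)

theorem reduction_to_faithful_quotient
    (p : ℕ) [Fact p.Prime] (G : Type) [Group G] [Fintype G]
    (P : Sylow p G) (V : FDRep ℂ G) (hV : CategoryTheory.Simple V)
    -- `N` is the kernel of the character `χ = V.character`:
    (N : Subgroup G) [N.Normal]
    (hker : ∀ g : G, g ∈ N ↔ V.character g = V.character 1)
    -- `χ̄` is the irreducible character of `G ⧸ N` with `χ = χ̄ ∘ π`:
    (χbar : G ⧸ N → ℂ) (hχbar : IsIrreducibleCharacter χbar)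
    (hfac : ∀ g : G, V.character g = χbar (g : G ⧸ N))
    -- assume the conclusion for `χ̄` and the Sylow `p`-subgroup `P̄ = PN/N` of `G ⧸ N`:
    (hyp : ZSumInducedPropertyAmb p ((P : Subgroup G).map (QuotientGroup.mk' N)) χbar
      (Module.finrank ℂ V)) :
    ZSumInducedPropertyAmb p (P : Subgroup G) V.character (Module.finrank ℂ V) := by
  rw [show V.character = χbar ∘ QuotientGroup.mk' N from funext hfac]
  exact reduction_to_faithful_quotient_general (QuotientGroup.mk'_surjective N)
    ((Nat.Prime.coprime_iff_not_dvd Fact.out).2 P.not_dvd_index) hyp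
end
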